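/- arXiv:1905.08153 — 12 statements merged into one kernel-verified Lean document; each statement's English description precedes it below -/
import Mathlib

section
/- Let d = d₁ + d₂j where d₁, d₂ ∈ ℂ = ℝ ⊕ ℝi ⊂ ℍₛ, and suppose I_d = 0 and d ≠ 0 (so |d₁|² = |d₂|² ≠ 0 and d₁ is invertible). Let e, f ∈ ℍₛ, let k₀ = Re(d₁⁻¹e), and set a = 1 + (d₁⁻¹d₂)j, b = d₁⁻¹e − k₀a, c = d₁⁻¹f − (k₀/2)(d₁⁻¹e) + (k₀²/4)a. Then I_a = 0, Re(b) = 0, and for every x ∈ ℍₛ, ax² + bx + c = 0 holds if and only if y = x − k₀/2 satisfies dy² + ey + f = 0; in particular dy² + ey + f = 0 is solvable in ℍₛ if and only if ax² + bx + c = 0 is solvable in ℍₛ. -/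
open Quaternion

/-- The embedding of `ℂ = ℝ ⊕ ℝi` into the split quaternions. -/
def SplitQuat.cemb (z : ℂ) : ℍ[ℝ,-1,1] := ⟨z.re, z.im, 0, 0⟩

/-- `I_x = x̄x = x₀² + x₁² − x₂² − x₃²`. -/
def SplitQuat.Ix (x : ℍ[ℝ,-1,1]) : ℝ := x.re ^ 2 + x.imI ^ 2 - x.imJ ^ 2 - x.imK ^ 2

/-- The basis element `j`. -/
def SplitQuat.jq : ℍ[ℝ,-1,1] := ⟨0, 0, 1, 0⟩

open SplitQuat

/-! Since `I_d = |d₁|² - |d₂|²`, a nonzero `d` with `I_d = 0` has `d₁ ≠ 0`. Left multiplication by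
the unit `d₁⁻¹` therefore preserves solutions, and it turns the leading coefficient `d` into `a`,
with `I_a = I_{d₁⁻¹} I_d = 0` and `Re a = 1`. The real number `k₀ / 2` is central, so the
substitution `y = x - k₀ / 2` acts as over a commutative ring: it subtracts `k₀ a` from the linear
coefficient `d₁⁻¹e`, which makes its real part vanish because `Re a = 1`. -/

theorem mul_sub_sq_add_mul_sub_add {A : Type*} [Ring A] {a b h x : A} (ha : Commute h a)
    (hb : Commute h b) (hx : Commute h x) (c : A) :
    a * (x - h) ^ 2 + b * (x - h) + c =
      a * x ^ 2 + (b - 2 * h * a) * x + (c - h * b + h ^ 2 * a) := by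
  have hsq : (x - h) ^ 2 = x ^ 2 - 2 * h * x + h ^ 2 := by
    rw [hx.symm.sub_sq, mul_assoc 2 x, ← hx.eq, ← mul_assoc]
  have hlin : a * (2 * h * x) = 2 * h * a * x := by
    rw [← mul_assoc, ((Commute.ofNat_left 2 a).mul_left ha).eq]
  rw [hsq, mul_add, mul_sub, hlin, mul_sub, ← hb.eq, ← (ha.pow_left 2).eq]
  noncomm_ring

section

variable {R : Type*} {c₁ c₂ c₃ : R}

theorem mul_sub_coe_half_sq_add_mul_sub_coe_half_add [Field R] [NeZero (2 : R)]
    (a b c x : ℍ[R,c₁,c₂,c₃]) (k : R) :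
    a * (x - ((k / 2 : R) : ℍ[R,c₁,c₂,c₃])) ^ 2 + b * (x - ((k / 2 : R) : ℍ[R,c₁,c₂,c₃])) + c =
      a * x ^ 2 + (b - (k : ℍ[R,c₁,c₂,c₃]) * a) * x +
        (c - ((k / 2 : R) : ℍ[R,c₁,c₂,c₃]) * b + ((k ^ 2 / 4 : R) : ℍ[R,c₁,c₂,c₃]) * a) := by
  have hk : (k : ℍ[R,c₁,c₂,c₃]) = 2 * ((k / 2 : R) : ℍ[R,c₁,c₂,c₃]) := by
    rw [← QuaternionAlgebra.coe_ofNat, ← QuaternionAlgebra.coe_mul, mul_div_cancel₀ k two_ne_zero]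
  have hk_sq : ((k ^ 2 / 4 : R) : ℍ[R,c₁,c₂,c₃]) = ((k / 2 : R) : ℍ[R,c₁,c₂,c₃]) ^ 2 := by
    rw [← QuaternionAlgebra.coe_pow, div_pow]
    norm_num
  rw [hk, hk_sq]
  exact mul_sub_sq_add_mul_sub_add (QuaternionAlgebra.coe_commute _ a)
    (QuaternionAlgebra.coe_commute _ b) (QuaternionAlgebra.coe_commute _ x) c

theorem re_sub_coe_re_mul_eq_zero [CommRing R] {a : ℍ[R,c₁,c₂,c₃]} (ha : a.re = 1)
    (b : ℍ[R,c₁,c₂,c₃]) : (b - (b.re : ℍ[R,c₁,c₂,c₃]) * a).re = 0 := by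
  rw [QuaternionAlgebra.re_sub, QuaternionAlgebra.coe_mul_eq_smul, QuaternionAlgebra.re_smul, ha,
    smul_eq_mul, mul_one, sub_self]

end

namespace SplitQuat

theorem cemb_zero : cemb 0 = 0 := rfl

theorem cemb_one : cemb 1 = 1 := rfl

theorem cemb_mul (z w : ℂ) : cemb (z * w) = cemb z * cemb w := by
  ext <;> simp [cemb, sub_eq_add_neg]

theorem isUnit_cemb {z : ℂ} (hz : z ≠ 0) : IsUnit (cemb z) :=
  ⟨⟨cemb z, cemb z⁻¹, by rw [← cemb_mul, mul_inv_cancel₀ hz, cemb_one],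
    by rw [← cemb_mul, inv_mul_cancel₀ hz, cemb_one]⟩, rfl⟩

theorem re_cemb_add_cemb_mul_jq (z w : ℂ) : (cemb z + cemb w * jq).re = z.re := by
  simp [cemb, jq]

theorem cemb_mul_cemb_add_cemb_mul_jq (u z w : ℂ) :
    cemb u * (cemb z + cemb w * jq) = cemb (u * z) + cemb (u * w) * jq := by
  rw [mul_add, ← mul_assoc, cemb_mul, cemb_mul]

theorem Ix_mul (x y : ℍ[ℝ,-1,1]) : Ix (x * y) = Ix x * Ix y := by
  simp only [Ix, QuaternionAlgebra.re_mul, QuaternionAlgebra.imI_mul, QuaternionAlgebra.imJ_mul,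
    QuaternionAlgebra.imK_mul]
  ring

theorem Ix_cemb_add_cemb_mul_jq (z w : ℂ) :
    Ix (cemb z + cemb w * jq) = Complex.normSq z - Complex.normSq w := by
  simp only [Ix, cemb, jq, QuaternionAlgebra.mk_mul_mk, mul_zero, neg_mul, one_mul, add_zero,
    mul_one, sub_self, zero_mul, sub_zero, zero_add, QuaternionAlgebra.mk_add_mk,
    Complex.normSq_apply]
  ring

theorem left_ne_zero_of_Ix_eq_zero {z w : ℂ} (hI : Ix (cemb z + cemb w * jq) = 0)
    (hne : cemb z + cemb w * jq ≠ 0) : z ≠ 0 := by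
  rintro rfl
  have hw : w = 0 := by
    rwa [Ix_cemb_add_cemb_mul_jq, map_zero, zero_sub, neg_eq_zero, Complex.normSq_eq_zero] at hI
  exact hne (by rw [hw, cemb_zero, zero_mul, add_zero])

end SplitQuat

/-- reduction of `dy² + ey + f = 0` with `d = d₁ + d₂ j` a nonzero
zero divisor (`I_d = 0`, `d ≠ 0`) to `ax² + bx + c = 0` with
`a = 1 + (d₁⁻¹d₂)j`, `b = d₁⁻¹e − k₀ a`, `c = d₁⁻¹f − (k₀/2)(d₁⁻¹e) + (k₀²/4)a`
where `k₀ = Re(d₁⁻¹e)`. -/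
theorem stmt1 (d₁ d₂ : ℂ) (e f : ℍ[ℝ,-1,1])
    (hI : Ix (cemb d₁ + cemb d₂ * jq) = 0)
    (hne : cemb d₁ + cemb d₂ * jq ≠ 0) :
    let d : ℍ[ℝ,-1,1] := cemb d₁ + cemb d₂ * jq
    let k₀ : ℝ := (cemb d₁⁻¹ * e).re
    let a : ℍ[ℝ,-1,1] := 1 + cemb (d₁⁻¹ * d₂) * jq
    let b : ℍ[ℝ,-1,1] := cemb d₁⁻¹ * e - (k₀ : ℍ[ℝ,-1,1]) * a
    let c : ℍ[ℝ,-1,1] := cemb d₁⁻¹ * f - ((k₀ / 2 : ℝ) : ℍ[ℝ,-1,1]) * (cemb d₁⁻¹ * e)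
        + ((k₀ ^ 2 / 4 : ℝ) : ℍ[ℝ,-1,1]) * a
    Ix a = 0 ∧ b.re = 0 ∧
    (∀ x : ℍ[ℝ,-1,1],
        a * x ^ 2 + b * x + c = 0 ↔
        d * (x - ((k₀ / 2 : ℝ) : ℍ[ℝ,-1,1])) ^ 2
            + e * (x - ((k₀ / 2 : ℝ) : ℍ[ℝ,-1,1])) + f = 0) ∧
    ((∃ y : ℍ[ℝ,-1,1], d * y ^ 2 + e * y + f = 0) ↔
      (∃ x : ℍ[ℝ,-1,1], a * x ^ 2 + b * x + c = 0)) := by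
  intro d k₀ a b c
  have hd₁ : d₁ ≠ 0 := left_ne_zero_of_Ix_eq_zero hI hne
  have ha : a = cemb d₁⁻¹ * d := by
    rw [cemb_mul_cemb_add_cemb_mul_jq, inv_mul_cancel₀ hd₁, cemb_one]
  have ha_re : a.re = 1 := re_cemb_add_cemb_mul_jq 1 (d₁⁻¹ * d₂)
  have heq (x : ℍ[ℝ,-1,1]) : a * x ^ 2 + b * x + c = 0 ↔
      d * (x - ((k₀ / 2 : ℝ) : ℍ[ℝ,-1,1])) ^ 2
        + e * (x - ((k₀ / 2 : ℝ) : ℍ[ℝ,-1,1])) + f = 0 := by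
    rw [← mul_sub_coe_half_sq_add_mul_sub_coe_half_add, ha, mul_assoc, mul_assoc, ← mul_add,
      ← mul_add, (isUnit_cemb (inv_ne_zero hd₁)).mul_right_eq_zero]
  refine ⟨?_, re_sub_coe_re_mul_eq_zero ha_re _, heq, ?_⟩
  · rw [ha, Ix_mul, hI, mul_zero]
  · exact (Equiv.subRight ((k₀ / 2 : ℝ) : ℍ[ℝ,-1,1])).surjective.exists.trans
      (exists_congr fun x => (heq x).symm)
end

section
/- Let w₀ ∈ ℝ, regarded as an element of ℍₛ. If w₀ ≤ 0, then x ∈ ℍₛ satisfies x² = w₀ if and only if x = x₁i + x₂j + x₃k for some x₁,x₂,x₃ ∈ ℝ with −x₁² + x₂² + x₃² = w₀. If w₀ > 0, then x ∈ ℍₛ satisfies x² = w₀ if and only if x = √w₀, or x = −√w₀, or x = x₁i + x₂j + x₃k with −x₁² + x₂² + x₃² = w₀. -/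
open Quaternion

/-!
The imaginary part of `x²` is `2 (re x) (im x)`, so if `x²` is a scalar then `re x = 0` or
`im x = 0`. In the first case `x² = (im x)²`, which is automatically a scalar; in the second `x` is
itself a scalar, hence a square root of `x²` in the base ring.
-/

section CommRing

variable {R : Type*} [CommRing R] {a b : R}

theorem quaternionAlgebra_sq_im (x : ℍ[R,a,b]) :
    x.im ^ 2 = ((a * x.imI ^ 2 + b * x.imJ ^ 2 - a * b * x.imK ^ 2 : R) : ℍ[R,a,b]) := by
  ext <;> simp [sq] <;> ring

theorem quaternionAlgebra_sq_im_eq_coe_iff {x : ℍ[R,a,b]} {c : R} :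
    x.im ^ 2 = (c : ℍ[R,a,b]) ↔ a * x.imI ^ 2 + b * x.imJ ^ 2 - a * b * x.imK ^ 2 = c := by
  rw [quaternionAlgebra_sq_im, QuaternionAlgebra.coe_inj]

theorem quaternionAlgebra_im_sq (x : ℍ[R,a,b]) : (x ^ 2).im = (2 * x.re) • x.im := by
  ext <;> simp [sq] <;> ring

theorem quaternionAlgebra_im_eq_self_iff {x : ℍ[R,a,b]} : x.im = x ↔ x.re = 0 := by
  simp [QuaternionAlgebra.ext_iff, eq_comm]

theorem quaternionAlgebra_coe_re_eq_self_iff {x : ℍ[R,a,b]} :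
    (x.re : ℍ[R,a,b]) = x ↔ x.im = 0 := by
  simp [QuaternionAlgebra.ext_iff, eq_comm]

variable [IsDomain R] [NeZero (2 : R)]

theorem quaternionAlgebra_re_eq_zero_or_im_eq_zero_of_sq_eq_coe {x : ℍ[R,a,b]} {c : R}
    (hx : x ^ 2 = (c : ℍ[R,a,b])) : x.re = 0 ∨ x.im = 0 := by
  have h : (2 * x.re) • x.im = 0 := by
    rw [← quaternionAlgebra_im_sq, hx, QuaternionAlgebra.im_coe]
  simpa [two_ne_zero] using h

theorem quaternionAlgebra_sq_eq_coe_iff {x : ℍ[R,a,b]} {c : R} :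
    x ^ 2 = (c : ℍ[R,a,b]) ↔
      (∃ r : R, r ^ 2 = c ∧ x = (r : ℍ[R,a,b])) ∨ x.re = 0 ∧ x.im ^ 2 = (c : ℍ[R,a,b]) := by
  constructor
  · intro hx
    rcases quaternionAlgebra_re_eq_zero_or_im_eq_zero_of_sq_eq_coe hx with hre | him
    · exact .inr ⟨hre, by rwa [quaternionAlgebra_im_eq_self_iff.mpr hre]⟩
    · have hcoe := (quaternionAlgebra_coe_re_eq_self_iff.mpr him).symm
      rw [hcoe, ← QuaternionAlgebra.coe_pow, QuaternionAlgebra.coe_inj] at hx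
      exact .inl ⟨x.re, hx, hcoe⟩
  · rintro (⟨r, rfl, rfl⟩ | ⟨hre, him⟩)
    · exact (QuaternionAlgebra.coe_pow r 2).symm
    · rwa [quaternionAlgebra_im_eq_self_iff.mpr hre] at him

theorem quaternionAlgebra_sq_eq_coe_sq_iff {x : ℍ[R,a,b]} {s : R} :
    x ^ 2 = ((s ^ 2 : R) : ℍ[R,a,b]) ↔
      x = (s : ℍ[R,a,b]) ∨ x = -(s : ℍ[R,a,b]) ∨
        x.re = 0 ∧ x.im ^ 2 = ((s ^ 2 : R) : ℍ[R,a,b]) := by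
  rw [quaternionAlgebra_sq_eq_coe_iff]
  simp only [sq_eq_sq_iff_eq_or_eq_neg, or_and_right, exists_or,
    exists_eq_left, QuaternionAlgebra.coe_neg, or_assoc]

end CommRing

section LinearOrder

variable {R : Type*} [CommRing R] [LinearOrder R] [IsStrictOrderedRing R] {a b : R}

theorem quaternionAlgebra_sq_eq_coe_iff_of_nonpos {x : ℍ[R,a,b]} {c : R} (hc : c ≤ 0) :
    x ^ 2 = (c : ℍ[R,a,b]) ↔ x.re = 0 ∧ x.im ^ 2 = (c : ℍ[R,a,b]) := by
  rw [quaternionAlgebra_sq_eq_coe_iff, or_iff_right_of_imp]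
  rintro ⟨r, rfl, rfl⟩
  have hr : r = 0 := (sq_nonpos_iff r).mp hc
  rw [QuaternionAlgebra.im_coe]
  simp [hr]

theorem stmt2_general (a b w₀ : R) :
    (w₀ ≤ 0 → ∀ x : ℍ[R,a,b],
        x ^ 2 = (w₀ : ℍ[R,a,b]) ↔
        (x.re = 0 ∧ a * x.imI ^ 2 + b * x.imJ ^ 2 - a * b * x.imK ^ 2 = w₀)) ∧
    (∀ s : R, s ^ 2 = w₀ → ∀ x : ℍ[R,a,b],
        x ^ 2 = (w₀ : ℍ[R,a,b]) ↔
        (x = (s : ℍ[R,a,b]) ∨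
          x = -(s : ℍ[R,a,b]) ∨
          (x.re = 0 ∧ a * x.imI ^ 2 + b * x.imJ ^ 2 - a * b * x.imK ^ 2 = w₀))) := by
  simp only [← quaternionAlgebra_sq_im_eq_coe_iff]
  refine ⟨fun hw x ↦ quaternionAlgebra_sq_eq_coe_iff_of_nonpos hw, ?_⟩
  rintro s rfl x
  exact quaternionAlgebra_sq_eq_coe_sq_iff

end LinearOrder

/-- square roots of a real number `w₀` in the split quaternions.
If `w₀ ≤ 0`, then `x² = w₀` iff `x` is purely imaginary with
`−x₁² + x₂² + x₃² = w₀`; if `w₀ > 0`, then `x² = w₀` iff `x = ±√w₀` or `x` is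
purely imaginary with `−x₁² + x₂² + x₃² = w₀`. -/
theorem stmt2 (w₀ : ℝ) :
    (w₀ ≤ 0 → ∀ x : ℍ[ℝ,-1,1],
        x ^ 2 = ((w₀ : ℝ) : ℍ[ℝ,-1,1]) ↔
        (x.re = 0 ∧ -x.imI ^ 2 + x.imJ ^ 2 + x.imK ^ 2 = w₀)) ∧
    (0 < w₀ → ∀ x : ℍ[ℝ,-1,1],
        x ^ 2 = ((w₀ : ℝ) : ℍ[ℝ,-1,1]) ↔
        (x = ((Real.sqrt w₀ : ℝ) : ℍ[ℝ,-1,1]) ∨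
          x = -((Real.sqrt w₀ : ℝ) : ℍ[ℝ,-1,1]) ∨
          (x.re = 0 ∧ -x.imI ^ 2 + x.imJ ^ 2 + x.imK ^ 2 = w₀))) := by
  obtain ⟨hnonpos, hsq⟩ := stmt2_general (-1) 1 w₀
  exact ⟨by simpa using hnonpos, fun hw ↦ by simpa using hsq (√w₀) (Real.sq_sqrt hw.le)⟩
end

section
/- Let w ∈ ℍₛ with w ∉ ℝ and write w₀ = Re(w). Then there exists x ∈ ℍₛ with x² = w if and only if I_w ≥ 0 and w₀ + √(I_w) > 0. -/
open Quaternion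

open SplitQuat

/-! Every element of a quaternion algebra satisfies `x² = T x - N`, with `T` its reduced trace and
`N` its reduced norm. If `x² = w` is not real then `T ≠ 0`, and taking norms and traces gives
`N(w) = N²` and `T(w) + 2√N(w) = T² - 2N + 2|N| ≥ T² > 0`. Conversely, if `s² = N(w)` then the same
quadratic equation for `w` reads `(w + s)² = (T(w) + 2s) w`, so `w + s` is a square root of `w` up
to a scalar factor. -/

section CommRing

variable {R : Type*} [CommRing R] {c₁ c₂ c₃ : R}

/-- The reduced trace `T(x) = x + x̄` of a quaternion algebra, as a linear map to the base ring. -/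
def reducedTrace : ℍ[R,c₁,c₂,c₃] →ₗ[R] R :=
  (2 : R) • QuaternionAlgebra.reₗ c₁ c₂ c₃ + c₂ • QuaternionAlgebra.imIₗ c₁ c₂ c₃

theorem reducedTrace_apply (x : ℍ[R,c₁,c₂,c₃]) :
    reducedTrace x = 2 * x.re + c₂ * x.imI :=
  rfl

theorem reducedTrace_eq_two_mul_re (x : ℍ[R,c₁,c₃]) : reducedTrace x = 2 * x.re := by
  rw [reducedTrace_apply, zero_mul, add_zero]

theorem coe_reducedTrace (x : ℍ[R,c₁,c₂,c₃]) :
    ((reducedTrace x : R) : ℍ[R,c₁,c₂,c₃]) = x + star x := by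
  rw [reducedTrace_apply, QuaternionAlgebra.self_add_star']

theorem reducedTrace_coe (r : R) : reducedTrace (r : ℍ[R,c₁,c₂,c₃]) = 2 * r := by
  simp [reducedTrace_apply]

/-- The reduced norm `N(x) = x̄x` of a quaternion algebra, as a multiplicative map to the base ring.
The product `x̄x` is a scalar, which is extracted as its real part. -/
def reducedNorm : ℍ[R,c₁,c₂,c₃] →* R where
  toFun x := (star x * x).re
  map_one' := by simp
  map_mul' x y := by
    apply QuaternionAlgebra.coe_injective (c₁ := c₁) (c₂ := c₂) (c₃ := c₃)
    calc ((star (x * y) * (x * y)).re : ℍ[R,c₁,c₂,c₃])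
        = star y * (star x * x) * y := by
          rw [← QuaternionAlgebra.star_mul_eq_coe, star_mul]; simp only [mul_assoc]
      _ = (star x * x) * (star y * y) := by
          rw [x.star_mul_eq_coe, ← QuaternionAlgebra.coe_commutes, mul_assoc]
      _ = ((star x * x).re * (star y * y).re : R) := by
          rw [QuaternionAlgebra.coe_mul, ← x.star_mul_eq_coe, ← y.star_mul_eq_coe]

theorem coe_reducedNorm (x : ℍ[R,c₁,c₂,c₃]) :
    ((reducedNorm x : R) : ℍ[R,c₁,c₂,c₃]) = star x * x :=
  x.star_mul_eq_coe.symm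

theorem sq_eq_reducedTrace_smul_sub_reducedNorm (x : ℍ[R,c₁,c₂,c₃]) :
    x ^ 2 = reducedTrace x • x - ((reducedNorm x : R) : ℍ[R,c₁,c₂,c₃]) := by
  rw [← QuaternionAlgebra.coe_mul_eq_smul, coe_reducedTrace, coe_reducedNorm]
  noncomm_ring

theorem reducedTrace_sq (x : ℍ[R,c₁,c₂,c₃]) :
    reducedTrace (x ^ 2) = reducedTrace x ^ 2 - 2 * reducedNorm x := by
  rw [sq_eq_reducedTrace_smul_sub_reducedNorm, map_sub, map_smul, reducedTrace_coe, smul_eq_mul, sq]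

theorem reducedTrace_ne_zero_of_sq_ne_coe {x : ℍ[R,c₁,c₂,c₃]}
    (hx : ∀ r : R, x ^ 2 ≠ (r : ℍ[R,c₁,c₂,c₃])) : reducedTrace x ≠ 0 := by
  intro h
  apply hx (-reducedNorm x)
  rw [sq_eq_reducedTrace_smul_sub_reducedNorm, h, zero_smul, zero_sub, QuaternionAlgebra.coe_neg]

theorem add_coe_sq_of_sq_eq_reducedNorm {w : ℍ[R,c₁,c₂,c₃]} {s : R} (hs : s ^ 2 = reducedNorm w) :
    (w + s) ^ 2 = (reducedTrace w + 2 * s) • w := by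
  calc (w + s) ^ 2 = w ^ 2 + (2 * s) • w + ((s ^ 2 : R) : ℍ[R,c₁,c₂,c₃]) := by
        rw [(QuaternionAlgebra.coe_commute s w).symm.add_sq, mul_assoc,
          QuaternionAlgebra.mul_coe_eq_smul, mul_smul, two_smul, two_mul, QuaternionAlgebra.coe_pow]
    _ = (reducedTrace w + 2 * s) • w := by
        rw [sq_eq_reducedTrace_smul_sub_reducedNorm, hs, add_smul]
        abel

end CommRing

theorem inv_smul_add_coe_sq_eq_self {K : Type*} [Field K] {c₁ c₂ c₃ : K} {w : ℍ[K,c₁,c₂,c₃]}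
    {s t : K} (hs : s ^ 2 = reducedNorm w) (ht : t ^ 2 = reducedTrace w + 2 * s) (ht₀ : t ≠ 0) :
    (t⁻¹ • (w + s)) ^ 2 = w := by
  rw [smul_pow, add_coe_sq_of_sq_eq_reducedNorm hs, ← ht, inv_pow,
    inv_smul_smul₀ (pow_ne_zero 2 ht₀)]

theorem reducedTrace_sq_le_reducedTrace_add_two_mul_sqrt {c₁ c₂ c₃ : ℝ} (x : ℍ[ℝ,c₁,c₂,c₃]) :
    reducedTrace x ^ 2 ≤ reducedTrace (x ^ 2) + 2 * √(reducedNorm (x ^ 2)) := by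
  rw [reducedTrace_sq, map_pow, Real.sqrt_sq_eq_abs]
  linarith [le_abs_self (reducedNorm x)]

theorem stmt3_general {c₁ c₂ c₃ : ℝ} (w : ℍ[ℝ,c₁,c₂,c₃])
    (hw : ∀ r : ℝ, w ≠ (r : ℍ[ℝ,c₁,c₂,c₃])) :
    (∃ x : ℍ[ℝ,c₁,c₂,c₃], x ^ 2 = w) ↔
      0 ≤ reducedNorm w ∧ 0 < reducedTrace w + 2 * √(reducedNorm w) := by
  constructor
  · rintro ⟨x, rfl⟩
    have reducedNorm_nonneg : 0 ≤ reducedNorm (x ^ 2) := by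
      rw [map_pow]
      exact sq_nonneg _
    have reducedTrace_sq_pos : 0 < reducedTrace x ^ 2 :=
      sq_pos_of_ne_zero (reducedTrace_ne_zero_of_sq_ne_coe hw)
    exact ⟨reducedNorm_nonneg,
      reducedTrace_sq_pos.trans_le (reducedTrace_sq_le_reducedTrace_add_two_mul_sqrt x)⟩
  · rintro ⟨reducedNorm_nonneg, trace_add_sqrt_pos⟩
    exact ⟨_, inv_smul_add_coe_sq_eq_self (Real.sq_sqrt reducedNorm_nonneg)
      (Real.sq_sqrt trace_add_sqrt_pos.le) (Real.sqrt_pos.2 trace_add_sqrt_pos).ne'⟩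

theorem SplitQuat.reducedNorm_eq_Ix (w : ℍ[ℝ,-1,1]) : reducedNorm w = Ix w := by
  change (star w * w).re = Ix w
  simp only [Ix, QuaternionAlgebra.re_mul, QuaternionAlgebra.re_star, QuaternionAlgebra.imI_star,
    QuaternionAlgebra.imJ_star, QuaternionAlgebra.imK_star]
  ring

/-- for a non-real split quaternion `w`, a square root of `w`
exists iff `I_w ≥ 0` and `Re w + √(I_w) > 0`. -/
theorem stmt3 (w : ℍ[ℝ,-1,1]) (hw : ∀ r : ℝ, w ≠ (r : ℍ[ℝ,-1,1])) :
    (∃ x : ℍ[ℝ,-1,1], x ^ 2 = w) ↔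
      (0 ≤ Ix w ∧ 0 < w.re + Real.sqrt (Ix w)) := by
  rw [stmt3_general w hw, reducedNorm_eq_Ix, reducedTrace_eq_two_mul_re, ← mul_add,
    mul_pos_iff_of_pos_left two_pos]
end

section
/- Let b ∈ ℝ and let c = c₀ + c₁i + c₂j + c₃k ∈ ℍₛ with c ∉ ℝ. Assume Δ := (b² − 4c₀)² − 16M_c ≥ 0 and (b² − 4c₀ − √Δ)/2 > 0, and set ρ₁ = √((b² − 4c₀ + √Δ)/2) and ρ₂ = √((b² − 4c₀ − √Δ)/2). Then for each index m ∈ {1,2}, the split quaternions x = (−b + ρₘ)/2 − (1/ρₘ)(c₁i + c₂j + c₃k) and x = (−b − ρₘ)/2 + (1/ρₘ)(c₁i + c₂j + c₃k) satisfy x² + bx + c = 0. -/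
open Quaternion

/-!
Completing the square turns `x² + bx + c = 0` into `(2x + b)² = b² - 4c`. The imaginary part `v`
of `c` squares to the real number `M_c`, so a square root of `b² - 4c = (b² - 4c₀) - 4v` can be
sought in the commutative subalgebra `ℝ[v]`: the element `ρ - 2ρ⁻¹v` has square
`(ρ² + 4ρ⁻²M_c) - 4v`, which is the right one as soon as `ρ⁴ - (b² - 4c₀)ρ² + 4M_c = 0`. This
biquadratic is a quadratic in `ρ²` of discriminant `Δ`; it is even in `ρ`, so `-ρ` serves as well
and gives the second solution.
-/

section Algebra

variable {K A : Type*} [Field K] [Ring A] [Algebra K A]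

theorem sq_add_smul_add_eq_zero_iff [NeZero (2 : K)] (b : K) (c x : A) :
    x ^ 2 + b • x + c = 0 ↔
      ((2 : K) • x + algebraMap K A b) ^ 2 = algebraMap K A (b ^ 2) - (4 : K) • c := by
  have four_ne : (4 : K) ≠ 0 := by
    rw [show (4 : K) = 2 * 2 by norm_num]
    exact mul_ne_zero two_ne_zero two_ne_zero
  have complete_square : ((2 : K) • x + algebraMap K A b) ^ 2 -
      (algebraMap K A (b ^ 2) - (4 : K) • c) = (4 : K) • (x ^ 2 + b • x + c) := by
    simp only [Algebra.algebraMap_eq_smul_one, sq, add_mul, mul_add, smul_mul_assoc,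
      mul_smul_comm, mul_one, one_mul]
    module
  rw [← sub_eq_zero (b := algebraMap K A (b ^ 2) - (4 : K) • c), complete_square,
    smul_eq_zero_iff_right four_ne]

theorem algebraMap_sub_smul_sq {v : A} {M p ρ : K} (hv : v ^ 2 = algebraMap K A M) (hρ₀ : ρ ≠ 0)
    (hρ : (ρ ^ 2) ^ 2 - p * ρ ^ 2 + 4 * M = 0) :
    (algebraMap K A ρ - (2 * ρ⁻¹) • v) ^ 2 = algebraMap K A p - (4 : K) • v := by
  have hp : ρ ^ 2 + (2 * ρ⁻¹) ^ 2 * M = p := by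
    field_simp
    linear_combination hρ
  have cross : 2 * ρ * (2 * ρ⁻¹) = 4 := by
    field_simp
    norm_num
  calc (algebraMap K A ρ - (2 * ρ⁻¹) • v) ^ 2
      = algebraMap K A (ρ ^ 2) - (2 * ρ * (2 * ρ⁻¹)) • v + (2 * ρ⁻¹) ^ 2 • v ^ 2 := by
        simp only [Algebra.algebraMap_eq_smul_one, sq, sub_mul, mul_sub, smul_mul_assoc,
          mul_smul_comm, mul_one, one_mul]
        module
    _ = algebraMap K A (ρ ^ 2 + (2 * ρ⁻¹) ^ 2 * M) - (2 * ρ * (2 * ρ⁻¹)) • v := by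
        simp only [hv, Algebra.algebraMap_eq_smul_one]
        module
    _ = algebraMap K A p - (4 : K) • v := by rw [hp, cross]

theorem sq_add_smul_add_eq_zero_of_biquadratic [NeZero (2 : K)] {v : A} {M b c₀ ρ : K}
    (hv : v ^ 2 = algebraMap K A M) (hρ₀ : ρ ≠ 0)
    (hρ : (ρ ^ 2) ^ 2 - (b ^ 2 - 4 * c₀) * ρ ^ 2 + 4 * M = 0) :
    (algebraMap K A ((-b + ρ) / 2) - ρ⁻¹ • v) ^ 2 +
      b • (algebraMap K A ((-b + ρ) / 2) - ρ⁻¹ • v) + (algebraMap K A c₀ + v) = 0 := by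
  have double : (2 : K) • (algebraMap K A ((-b + ρ) / 2) - ρ⁻¹ • v) + algebraMap K A b =
      algebraMap K A ρ - (2 * ρ⁻¹) • v := by
    simp only [Algebra.algebraMap_eq_smul_one]
    match_scalars <;> field_simp
    ring
  rw [sq_add_smul_add_eq_zero_iff, double, algebraMap_sub_smul_sq hv hρ₀ hρ]
  simp only [Algebra.algebraMap_eq_smul_one]
  module

end Algebra

theorem biquadratic_eq_zero_of_eq_sqrt {p M ρ : ℝ} (hΔ : 0 ≤ p ^ 2 - 16 * M) (hρ₀ : ρ ≠ 0)
    (hρ : ρ = √((p + √(p ^ 2 - 16 * M)) / 2) ∨ ρ = √((p - √(p ^ 2 - 16 * M)) / 2)) :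
    (ρ ^ 2) ^ 2 - p * ρ ^ 2 + 4 * M = 0 := by
  have sq_of_eq_sqrt {t : ℝ} (h : ρ = √t) : ρ ^ 2 = t := by
    rw [h, Real.sq_sqrt (Real.sqrt_ne_zero'.1 (h ▸ hρ₀)).le]
  have hdiscrim : discrim 1 (-p) (4 * M) = √(p ^ 2 - 16 * M) * √(p ^ 2 - 16 * M) := by
    rw [Real.mul_self_sqrt hΔ, discrim]
    ring
  have hroot := (quadratic_eq_zero_iff one_ne_zero hdiscrim (ρ ^ 2)).2 <| by
    simpa only [neg_neg, mul_one] using hρ.imp sq_of_eq_sqrt sq_of_eq_sqrt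
  linear_combination hroot

theorem ne_zero_of_eq_sqrt_half_add_or_sub {p s ρ : ℝ} (hs : 0 ≤ s) (hpos : 0 < (p - s) / 2)
    (hρ : ρ = √((p + s) / 2) ∨ ρ = √((p - s) / 2)) : ρ ≠ 0 := by
  rcases hρ with rfl | rfl
  · exact Real.sqrt_ne_zero'.2 (by linarith)
  · exact Real.sqrt_ne_zero'.2 hpos

theorem quaternionAlgebra_mk_zero_sq {R : Type*} [CommRing R] (α β x y z : R) :
    (⟨0, x, y, z⟩ : ℍ[R,α,β]) ^ 2 =
      algebraMap R ℍ[R,α,β] (α * x ^ 2 + β * y ^ 2 - α * β * z ^ 2) := by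
  ext <;> simp [sq] <;> ring

theorem stmt5_general {A : Type*} [Ring A] [Algebra ℝ A] {v : A} {M b c₀ ρ : ℝ}
    (hv : v ^ 2 = algebraMap ℝ A M) (hΔ : 0 ≤ (b ^ 2 - 4 * c₀) ^ 2 - 16 * M) (hρ₀ : ρ ≠ 0)
    (hρ : ρ = √((b ^ 2 - 4 * c₀ + √((b ^ 2 - 4 * c₀) ^ 2 - 16 * M)) / 2) ∨
      ρ = √((b ^ 2 - 4 * c₀ - √((b ^ 2 - 4 * c₀) ^ 2 - 16 * M)) / 2)) :
    (algebraMap ℝ A ((-b + ρ) / 2) - ρ⁻¹ • v) ^ 2 +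
        b • (algebraMap ℝ A ((-b + ρ) / 2) - ρ⁻¹ • v) + (algebraMap ℝ A c₀ + v) = 0 ∧
      (algebraMap ℝ A ((-b - ρ) / 2) + ρ⁻¹ • v) ^ 2 +
        b • (algebraMap ℝ A ((-b - ρ) / 2) + ρ⁻¹ • v) + (algebraMap ℝ A c₀ + v) = 0 := by
  have biquadratic := biquadratic_eq_zero_of_eq_sqrt hΔ hρ₀ hρ
  refine ⟨sq_add_smul_add_eq_zero_of_biquadratic hv hρ₀ biquadratic, ?_⟩
  have root_neg := sq_add_smul_add_eq_zero_of_biquadratic hv (neg_ne_zero.2 hρ₀)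
    ((neg_sq ρ).symm ▸ biquadratic)
  simpa only [inv_neg, neg_smul, sub_neg_eq_add, ← sub_eq_add_neg] using root_neg

/-- quadratic formula for `x² + bx + c = 0` with real `b` and
non-real `c = c₀ + c₁i + c₂j + c₃k`, under `Δ = (b² − 4c₀)² − 16 M_c ≥ 0` and
`(b² − 4c₀ − √Δ)/2 > 0`: for `ρ ∈ {ρ₁, ρ₂}`, both
`x = (−b + ρ)/2 − ρ⁻¹(c₁i + c₂j + c₃k)` and
`x = (−b − ρ)/2 + ρ⁻¹(c₁i + c₂j + c₃k)` are roots. -/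
theorem stmt5 (b c₀ c₁ c₂ c₃ : ℝ)
    (hc : ¬(c₁ = 0 ∧ c₂ = 0 ∧ c₃ = 0))
    (hΔ : 0 ≤ (b ^ 2 - 4 * c₀) ^ 2 - 16 * (-c₁ ^ 2 + c₂ ^ 2 + c₃ ^ 2))
    (hpos : 0 < (b ^ 2 - 4 * c₀ -
        Real.sqrt ((b ^ 2 - 4 * c₀) ^ 2 - 16 * (-c₁ ^ 2 + c₂ ^ 2 + c₃ ^ 2))) / 2) :
    let c : ℍ[ℝ,-1,1] := ⟨c₀, c₁, c₂, c₃⟩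
    let cim : ℍ[ℝ,-1,1] := ⟨0, c₁, c₂, c₃⟩
    let Δ : ℝ := (b ^ 2 - 4 * c₀) ^ 2 - 16 * (-c₁ ^ 2 + c₂ ^ 2 + c₃ ^ 2)
    let ρ₁ : ℝ := Real.sqrt ((b ^ 2 - 4 * c₀ + Real.sqrt Δ) / 2)
    let ρ₂ : ℝ := Real.sqrt ((b ^ 2 - 4 * c₀ - Real.sqrt Δ) / 2)
    ∀ ρ : ℝ, (ρ = ρ₁ ∨ ρ = ρ₂) →
      ((((-b + ρ) / 2 : ℝ) : ℍ[ℝ,-1,1]) - ((ρ⁻¹ : ℝ) : ℍ[ℝ,-1,1]) * cim) ^ 2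
          + ((b : ℝ) : ℍ[ℝ,-1,1]) *
            ((((-b + ρ) / 2 : ℝ) : ℍ[ℝ,-1,1]) - ((ρ⁻¹ : ℝ) : ℍ[ℝ,-1,1]) * cim) + c = 0 ∧
      ((((-b - ρ) / 2 : ℝ) : ℍ[ℝ,-1,1]) + ((ρ⁻¹ : ℝ) : ℍ[ℝ,-1,1]) * cim) ^ 2
          + ((b : ℝ) : ℍ[ℝ,-1,1]) *
            ((((-b - ρ) / 2 : ℝ) : ℍ[ℝ,-1,1]) + ((ρ⁻¹ : ℝ) : ℍ[ℝ,-1,1]) * cim) + c = 0 := by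
  intro c cim Δ ρ₁ ρ₂ ρ hρ
  have cim_sq : cim ^ 2 = algebraMap ℝ ℍ[ℝ,-1,1] (-c₁ ^ 2 + c₂ ^ 2 + c₃ ^ 2) := by
    simpa using quaternionAlgebra_mk_zero_sq (-1) 1 c₁ c₂ c₃
  have c_eq : c = algebraMap ℝ ℍ[ℝ,-1,1] c₀ + cim := by ext <;> simp [c, cim]
  simp only [QuaternionAlgebra.coe_mul_eq_smul, c_eq]
  exact stmt5_general cim_sq hΔ (ne_zero_of_eq_sqrt_half_add_or_sub (Real.sqrt_nonneg _) hpos hρ) hρ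
end

section
/- Let B, E, D ∈ ℝ with D ≠ 0, and set F₁ = (−2B³ + 2(B² + 12E)^{3/2})/27 + 8EB/3 − D² and F₂ = (−2B³ − 2(B² + 12E)^{3/2})/27 + 8EB/3 − D². If one of the following holds: (i) B² + 12E ≤ 0; (ii) B² + 12E > 0 and B ≥ 0; (iii) B < 0 and B² − 4E < 0; (iv) B² + 12E > 0, B < 0, B² − 4E > 0 and F₁ < 0; (v) B² + 12E > 0, B < 0, B² − 4E > 0 and F₂ > 0 — then the cubic equation z³ + 2Bz² + (B² − 4E)z − D² = 0 has exactly one real solution z in the interval (0, ∞). -/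
/-!
Suppose a cubic `a z³ + b z² + c z + d` with `a > 0 > d` has two distinct positive roots `x`, `y`.
Then it splits, and the third root is positive because the product of the roots is `-d / a`. Hence
`b < 0 < c` by Vieta's formulas, and expressing `b² - 3ac` and the discriminant through the roots
gives `3ac < b²` and `0 ≤ discr`. So a positive root, which exists since the cubic is negative at
`0`, is unique as soon as one of these four inequalities fails.

For the cubic of the theorem `b² - 3ac = B² + 12E`, and `F₁`, `F₂` are its values at the two
critical points, where it has its local maximum and local minimum. The product of the critical
values is `-discr / (27a²)`, so a negative maximum or a positive minimum forces `discr < 0`.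
-/

section Existence

open Polynomial

theorem exists_pos_isRoot {p : ℝ[X]} (hlead : 0 < p.leadingCoeff) (h0 : p.eval 0 < 0) :
    ∃ x, 0 < x ∧ p.IsRoot x := by
  have hdeg : 0 < p.degree := by
    by_contra! hdeg
    rw [eq_C_of_degree_le_zero hdeg, leadingCoeff_C] at hlead
    rw [eq_C_of_degree_le_zero hdeg, eval_C] at h0
    exact lt_asymm hlead h0
  obtain ⟨M, hM, hM0⟩ : ∃ M, 0 ≤ p.eval M ∧ 0 ≤ M :=
    (((p.tendsto_atTop_of_leadingCoeff_nonneg hdeg hlead.le).eventually_ge_atTop 0).and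
      (Filter.eventually_ge_atTop 0)).exists
  obtain ⟨x, hx, hroot⟩ := intermediate_value_Ioc hM0 p.continuousOn ⟨h0, hM⟩
  exact ⟨x, hx.1, hroot⟩

end Existence

section Field

variable {F : Type*} [Field F] {P : Cubic F} {x y s : F}

theorem exists_roots_eq_of_ne (ha : P.a ≠ 0) (hx : x ∈ P.roots) (hy : y ∈ P.roots) (hxy : x ≠ y) :
    ∃ z, P.roots = {x, y, z} := by
  have hP := Cubic.ne_zero_of_a_ne_zero ha
  rw [Cubic.mem_roots_iff hP] at hx hy
  obtain ⟨z, hb⟩ : ∃ z, P.b = P.a * -(x + y + z) := ⟨-P.b / P.a - x - y, by field_simp; ring⟩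
  have hc : P.c = P.a * (x * y + x * z + y * z) := by
    apply mul_left_cancel₀ (sub_ne_zero.mpr hxy)
    linear_combination hx - hy - (x ^ 2 - y ^ 2) * hb
  have hd : P.d = P.a * -(x * y * z) := by linear_combination hx - x ^ 2 * hb - x * hc
  have hfactor : P.toPoly = .C P.a * (.X - .C x) * (.X - .C y) * (.X - .C z) := by
    rw [Cubic.C_mul_prod_X_sub_C_eq, ← hb, ← hc, ← hd]
  refine ⟨z, ?_⟩
  rw [Cubic.roots, hfactor, mul_assoc, mul_assoc, Polynomial.roots_C_mul _ ha]
  simpa using Polynomial.roots_multiset_prod_X_sub_C {x, y, z}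

theorem eval_toPoly_critical_point (h3 : (3 : F) ≠ 0) (ha : P.a ≠ 0)
    (hs : s ^ 2 = P.b ^ 2 - 3 * P.a * P.c) :
    P.toPoly.eval ((-P.b + s) / (3 * P.a)) =
      (2 * P.b ^ 3 - 2 * s ^ 3) / (27 * P.a ^ 2) - P.b * P.c / (3 * P.a) + P.d := by
  have h27 : (27 : F) = 3 ^ 3 := by norm_num
  simp only [Cubic.toPoly, Polynomial.eval_add, Polynomial.eval_mul, Polynomial.eval_C,
    Polynomial.eval_pow, Polynomial.eval_X, h27]
  field_simp
  linear_combination 3 * s * hs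

theorem eval_toPoly_critical_point_neg (h3 : (3 : F) ≠ 0) (ha : P.a ≠ 0)
    (hs : s ^ 2 = P.b ^ 2 - 3 * P.a * P.c) :
    P.toPoly.eval ((-P.b - s) / (3 * P.a)) =
      (2 * P.b ^ 3 + 2 * s ^ 3) / (27 * P.a ^ 2) - P.b * P.c / (3 * P.a) + P.d := by
  rw [sub_eq_add_neg, eval_toPoly_critical_point h3 ha ((neg_sq s).trans hs)]
  ring

theorem critical_values_mul (h3 : (3 : F) ≠ 0) (ha : P.a ≠ 0)
    (hs : s ^ 2 = P.b ^ 2 - 3 * P.a * P.c) :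
    P.toPoly.eval ((-P.b - s) / (3 * P.a)) * P.toPoly.eval ((-P.b + s) / (3 * P.a)) =
      -P.discr / (27 * P.a ^ 2) := by
  have hs6 : s ^ 6 = (P.b ^ 2 - 3 * P.a * P.c) ^ 3 := by rw [← hs]; ring
  have h27 : (27 : F) = 3 ^ 3 := by norm_num
  rw [eval_toPoly_critical_point_neg h3 ha hs, eval_toPoly_critical_point h3 ha hs, Cubic.discr,
    h27]
  field_simp
  linear_combination -4 * hs6

end Field

section Order

variable {F : Type*} [Field F] [LinearOrder F] [IsStrictOrderedRing F] {P : Cubic F} {x y z s : F}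

theorem b_neg_of_roots_pos (ha : 0 < P.a) (h : P.roots = {x, y, z})
    (hx : 0 < x) (hy : 0 < y) (hz : 0 < z) : P.b < 0 := by
  have hb : P.b = P.a * -(x + y + z) := Cubic.b_eq_three_roots (φ := .id F) ha.ne' h
  rw [hb]
  exact mul_neg_of_pos_of_neg ha (neg_neg_of_pos (by positivity))

theorem c_pos_of_roots_pos (ha : 0 < P.a) (h : P.roots = {x, y, z})
    (hx : 0 < x) (hy : 0 < y) (hz : 0 < z) : 0 < P.c := by
  have hc : P.c = P.a * (x * y + x * z + y * z) := Cubic.c_eq_three_roots (φ := .id F) ha.ne' h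
  rw [hc]
  positivity

theorem third_root_pos (ha : 0 < P.a) (hd : P.d < 0) (h : P.roots = {x, y, z})
    (hx : 0 < x) (hy : 0 < y) : 0 < z := by
  have hprod : P.d = P.a * -(x * y * z) := Cubic.d_eq_three_roots (φ := .id F) ha.ne' h
  have hpos : 0 < P.a * x * y * z := by linarith
  exact (mul_pos_iff_of_pos_left (by positivity)).mp hpos

theorem three_mul_a_mul_c_lt_b_sq (ha : P.a ≠ 0) (h : P.roots = {x, y, z}) (hxy : x ≠ y) :
    3 * P.a * P.c < P.b ^ 2 := by
  have hb : P.b = P.a * -(x + y + z) := Cubic.b_eq_three_roots (φ := .id F) ha h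
  have hc : P.c = P.a * (x * y + x * z + y * z) := Cubic.c_eq_three_roots (φ := .id F) ha h
  have hsum : P.b ^ 2 - 3 * P.a * P.c =
      P.a ^ 2 * ((x - y) ^ 2 + (x - z) ^ 2 + (y - z) ^ 2) / 2 := by
    rw [hb, hc]; ring
  rw [← sub_pos, hsum]
  have := sub_ne_zero.mpr hxy
  positivity

theorem discr_nonneg_of_roots_eq (ha : P.a ≠ 0) (h : P.roots = {x, y, z}) : 0 ≤ P.discr :=
  (sq_nonneg _).trans_eq (Cubic.discr_eq_prod_three_roots (φ := .id F) ha h).symm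

theorem eq_of_mem_roots_of_pos (ha : 0 < P.a) (hd : P.d < 0)
    (h : 0 ≤ P.b ∨ P.c ≤ 0 ∨ P.b ^ 2 ≤ 3 * P.a * P.c ∨ P.discr < 0)
    (hx : x ∈ P.roots) (hx0 : 0 < x) (hy : y ∈ P.roots) (hy0 : 0 < y) : x = y := by
  by_contra hxy
  obtain ⟨z, hroots⟩ := exists_roots_eq_of_ne ha.ne' hx hy hxy
  have hz0 := third_root_pos ha hd hroots hx0 hy0
  rcases h with hb | hc | hbc | hdiscr
  · exact (b_neg_of_roots_pos ha hroots hx0 hy0 hz0).not_ge hb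
  · exact (c_pos_of_roots_pos ha hroots hx0 hy0 hz0).not_ge hc
  · exact (three_mul_a_mul_c_lt_b_sq ha.ne' hroots hxy).not_ge hbc
  · exact (discr_nonneg_of_roots_eq ha.ne' hroots).not_gt hdiscr

theorem critical_value_le (ha : P.a ≠ 0) (hs0 : 0 ≤ s) (hs : s ^ 2 = P.b ^ 2 - 3 * P.a * P.c) :
    P.toPoly.eval ((-P.b + s) / (3 * P.a)) ≤ P.toPoly.eval ((-P.b - s) / (3 * P.a)) := by
  rw [eval_toPoly_critical_point three_ne_zero ha hs,
    eval_toPoly_critical_point_neg three_ne_zero ha hs]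
  gcongr
  linarith [pow_nonneg hs0 3]

theorem discr_neg_of_critical_values_mul_pos (ha : P.a ≠ 0) (hs : s ^ 2 = P.b ^ 2 - 3 * P.a * P.c)
    (h : 0 < P.toPoly.eval ((-P.b - s) / (3 * P.a)) * P.toPoly.eval ((-P.b + s) / (3 * P.a))) :
    P.discr < 0 := by
  rw [critical_values_mul three_ne_zero ha hs] at h
  exact neg_pos.mp ((div_pos_iff_of_pos_right (by positivity)).mp h)

theorem discr_neg_of_local_max_neg (ha : P.a ≠ 0) (hs0 : 0 ≤ s)
    (hs : s ^ 2 = P.b ^ 2 - 3 * P.a * P.c) (h : P.toPoly.eval ((-P.b - s) / (3 * P.a)) < 0) :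
    P.discr < 0 :=
  discr_neg_of_critical_values_mul_pos ha hs
    (mul_pos_of_neg_of_neg h ((critical_value_le ha hs0 hs).trans_lt h))

theorem discr_neg_of_local_min_pos (ha : P.a ≠ 0) (hs0 : 0 ≤ s)
    (hs : s ^ 2 = P.b ^ 2 - 3 * P.a * P.c) (h : 0 < P.toPoly.eval ((-P.b + s) / (3 * P.a))) :
    P.discr < 0 :=
  discr_neg_of_critical_values_mul_pos ha hs
    (mul_pos (h.trans_le (critical_value_le ha hs0 hs)) h)

end Order

theorem existsUnique_pos_root {P : Cubic ℝ} (ha : 0 < P.a) (hd : P.d < 0)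
    (h : 0 ≤ P.b ∨ P.c ≤ 0 ∨ P.b ^ 2 ≤ 3 * P.a * P.c ∨ P.discr < 0) :
    ∃! x, 0 < x ∧ P.a * x ^ 3 + P.b * x ^ 2 + P.c * x + P.d = 0 := by
  have hP := Cubic.ne_zero_of_a_ne_zero ha.ne'
  have hlead : 0 < P.toPoly.leadingCoeff := by rwa [Cubic.leadingCoeff_of_a_ne_zero ha.ne']
  have heval : P.toPoly.eval 0 < 0 := by
    rwa [← Polynomial.coeff_zero_eq_eval_zero, Cubic.coeff_eq_d]
  simp only [← Cubic.mem_roots_iff hP]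
  obtain ⟨x, hx0, hx⟩ := exists_pos_isRoot hlead heval
  have hmem : x ∈ P.roots := (Polynomial.mem_roots hP).mpr hx
  exact ⟨x, ⟨hx0, hmem⟩, fun y ⟨hy0, hy⟩ ↦ eq_of_mem_roots_of_pos ha hd h hy hy0 hmem hx0⟩

section Resolvent

/-- The resolvent cubic `z³ + 2Bz² + (B² - 4E)z - D²` of the quartic `x⁴ + Bx² + Dx + E`: its roots
are the `z = u²` for which the quartic factors as `(x² + ux + v)(x² - ux + w)` over an algebraically
closed field. -/
def resolventCubic {R : Type*} [Ring R] (B E D : R) : Cubic R :=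
  ⟨1, 2 * B, B ^ 2 - 4 * E, -D ^ 2⟩

theorem resolventCubic_b_sq_sub {R : Type*} [CommRing R] (B E D : R) :
    (resolventCubic B E D).b ^ 2 - 3 * (resolventCubic B E D).a * (resolventCubic B E D).c =
      B ^ 2 + 12 * E := by
  simp only [resolventCubic]
  ring

variable {F : Type*} [Field F] [LinearOrder F] [IsStrictOrderedRing F] {B E D s : F}

theorem resolventCubic_discr_neg_of_local_max_neg (hs0 : 0 ≤ s) (hs : s ^ 2 = B ^ 2 + 12 * E)
    (hmax : (-2 * B ^ 3 + 2 * s ^ 3) / 27 + 8 * E * B / 3 - D ^ 2 < 0) :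
    (resolventCubic B E D).discr < 0 := by
  have hs' := hs.trans (resolventCubic_b_sq_sub B E D).symm
  refine discr_neg_of_local_max_neg one_ne_zero hs0 hs' ?_
  rw [eval_toPoly_critical_point_neg three_ne_zero one_ne_zero hs']
  refine lt_of_eq_of_lt ?_ hmax
  simp only [resolventCubic]
  ring

theorem resolventCubic_discr_neg_of_local_min_pos (hs0 : 0 ≤ s) (hs : s ^ 2 = B ^ 2 + 12 * E)
    (hmin : 0 < (-2 * B ^ 3 - 2 * s ^ 3) / 27 + 8 * E * B / 3 - D ^ 2) :
    (resolventCubic B E D).discr < 0 := by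
  have hs' := hs.trans (resolventCubic_b_sq_sub B E D).symm
  refine discr_neg_of_local_min_pos one_ne_zero hs0 hs' ?_
  rw [eval_toPoly_critical_point three_ne_zero one_ne_zero hs']
  refine lt_of_lt_of_eq hmin ?_
  simp only [resolventCubic]
  ring

end Resolvent

/-- under any of the conditions (i)–(v), the cubic
`z³ + 2Bz² + (B² − 4E)z − D² = 0` (with `D ≠ 0`) has exactly one solution in
`(0, ∞)`. Here `(B² + 12E)^{3/2}` is `(√(B² + 12E))³`. -/
theorem stmt8 (B E D : ℝ) (hD : D ≠ 0) :
    let F₁ : ℝ := (-2 * B ^ 3 + 2 * (Real.sqrt (B ^ 2 + 12 * E)) ^ 3) / 27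
        + 8 * E * B / 3 - D ^ 2
    let F₂ : ℝ := (-2 * B ^ 3 - 2 * (Real.sqrt (B ^ 2 + 12 * E)) ^ 3) / 27
        + 8 * E * B / 3 - D ^ 2
    (B ^ 2 + 12 * E ≤ 0 ∨
      (0 < B ^ 2 + 12 * E ∧ 0 ≤ B) ∨
      (B < 0 ∧ B ^ 2 - 4 * E < 0) ∨
      (0 < B ^ 2 + 12 * E ∧ B < 0 ∧ 0 < B ^ 2 - 4 * E ∧ F₁ < 0) ∨
      (0 < B ^ 2 + 12 * E ∧ B < 0 ∧ 0 < B ^ 2 - 4 * E ∧ 0 < F₂)) →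
    ∃! z : ℝ, 0 < z ∧ z ^ 3 + 2 * B * z ^ 2 + (B ^ 2 - 4 * E) * z - D ^ 2 = 0 := by
  intro F₁ F₂ h
  let P := resolventCubic B E D
  have hsqrt := Real.sqrt_nonneg (B ^ 2 + 12 * E)
  have hcoeff : 0 ≤ P.b ∨ P.c ≤ 0 ∨ P.b ^ 2 ≤ 3 * P.a * P.c ∨ P.discr < 0 := by
    rcases h with hBE | ⟨-, hB⟩ | ⟨-, hc⟩ | ⟨hBE, -, -, hF₁⟩ | ⟨hBE, -, -, hF₂⟩
    · right; right; left
      simp only [P, resolventCubic]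
      linarith
    · exact .inl (mul_nonneg zero_le_two hB)
    · exact .inr (.inl hc.le)
    · exact .inr (.inr (.inr
        (resolventCubic_discr_neg_of_local_max_neg hsqrt (Real.sq_sqrt hBE.le) hF₁)))
    · exact .inr (.inr (.inr
        (resolventCubic_discr_neg_of_local_min_pos hsqrt (Real.sq_sqrt hBE.le) hF₂)))
  have hd : P.d < 0 := neg_neg_of_pos (by positivity)
  simpa only [P, resolventCubic, one_mul, ← sub_eq_add_neg] using
    existsUnique_pos_root one_pos hd hcoeff
end

section
/- Let B, E, D ∈ ℝ with D ≠ 0 and B² + 12E > 0, B < 0, B² − 4E > 0, and set F₁ = (−2B³ + 2(B² + 12E)^{3/2})/27 + 8EB/3 − D² and F₂ = (−2B³ − 2(B² + 12E)^{3/2})/27 + 8EB/3 − D². If F₁ = 0 or F₂ = 0, then the cubic equation z³ + 2Bz² + (B² − 4E)z − D² = 0 has exactly two real solutions in (0, ∞). If F₁ > 0 > F₂, then it has exactly three real solutions in (0, ∞). -/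
/-!
In monic form the cubic is `t³ + at² + bt + c` with `a = 2B`, `b = B² - 4E`, `c = -D²`, and
`a² - 3b = B² + 12E`. Hence, with `s = √(B² + 12E)`, its critical points are `(-a ± s) / 3`,
and `F₁` and `F₂` are its values there: the local maximum and the local minimum.

The signs of `a`, `b`, `c` are `-`, `+`, `-`, so every real root is positive and it suffices to
count real roots. If a critical value vanishes, the cubic has a double root and, as `s ≠ 0`, a
different simple one. If the local maximum is positive and the local minimum negative, the
intermediate value theorem gives three roots: at a critical point `m` the Taylor expansion shows
that the value at `m` is taken again at `-a - 2m`, which supplies the two outer sign changes.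
-/

/-- The monic cubic polynomial function with coefficients `a`, `b`, `c` in decreasing degree,
the common form of the cubic equations whose roots are counted. It is encoded as a function rather
than through `Cubic.toPoly`, since only its values matter. -/
def monicCubic {R : Type*} [CommRing R] (a b c t : R) : R :=
  t ^ 3 + a * t ^ 2 + b * t + c

/-- `m` is a critical point of the cubic functions `monicCubic a b c`, for any constant term `c`.
The derivative is written out, so that the notion makes sense over every commutative ring. -/
def IsCubicCriticalPoint {R : Type*} [CommRing R] (a b m : R) : Prop :=
  3 * m ^ 2 + 2 * a * m + b = 0

section CommRing

variable {R : Type*} [CommRing R] {a b c m : R}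

theorem IsCubicCriticalPoint.monicCubic_eq_add (hm : IsCubicCriticalPoint a b m) (t : R) :
    monicCubic a b c t = monicCubic a b c m + (t - m) ^ 2 * (t - (-a - 2 * m)) := by
  unfold IsCubicCriticalPoint at hm
  unfold monicCubic
  linear_combination (t - m) * hm

theorem IsCubicCriticalPoint.monicCubic_neg_sub_two_mul (hm : IsCubicCriticalPoint a b m) :
    monicCubic a b c (-a - 2 * m) = monicCubic a b c m := by
  simp [hm.monicCubic_eq_add (-a - 2 * m)]

theorem IsCubicCriticalPoint.two_mul_eq [NoZeroDivisors R] {p q : R}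
    (hp : IsCubicCriticalPoint a b p) (hq : IsCubicCriticalPoint a b q) (hpq : p ≠ q) :
    2 * a = -3 * (p + q) := by
  unfold IsCubicCriticalPoint at hp hq
  apply mul_left_cancel₀ (sub_ne_zero.mpr hpq)
  linear_combination hp - hq

theorem monicCubic_eq_mul_of_roots [NoZeroDivisors R] {x y z : R}
    (hxy : x ≠ y) (hxz : x ≠ z) (hyz : y ≠ z) (hx : monicCubic a b c x = 0)
    (hy : monicCubic a b c y = 0) (hz : monicCubic a b c z = 0) (t : R) :
    monicCubic a b c t = (t - x) * (t - y) * (t - z) := by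
  unfold monicCubic at *
  have quadratic_y : x ^ 2 + x * y + y ^ 2 + a * (x + y) + b = 0 := by
    apply mul_left_cancel₀ (sub_ne_zero.mpr hxy)
    linear_combination hx - hy
  have quadratic_z : x ^ 2 + x * z + z ^ 2 + a * (x + z) + b = 0 := by
    apply mul_left_cancel₀ (sub_ne_zero.mpr hxz)
    linear_combination hx - hz
  have sum_roots : x + y + z + a = 0 := by
    apply mul_left_cancel₀ (sub_ne_zero.mpr hyz)
    linear_combination quadratic_y - quadratic_z
  linear_combination hx + (t - x) * quadratic_y + (t - x) * (t - y) * sum_roots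

theorem setOf_monicCubic_eq_zero_of_roots [NoZeroDivisors R] {x y z : R}
    (hxy : x ≠ y) (hxz : x ≠ z) (hyz : y ≠ z) (hx : monicCubic a b c x = 0)
    (hy : monicCubic a b c y = 0) (hz : monicCubic a b c z = 0) :
    {t | monicCubic a b c t = 0} = {x, y, z} := by
  ext t
  simp [monicCubic_eq_mul_of_roots hxy hxz hyz hx hy hz, sub_eq_zero, or_assoc]

theorem IsCubicCriticalPoint.setOf_monicCubic_eq_zero [NoZeroDivisors R]
    (hm : IsCubicCriticalPoint a b m) (h0 : monicCubic a b c m = 0) :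
    {t | monicCubic a b c t = 0} = {m, -a - 2 * m} := by
  ext t
  simp [hm.monicCubic_eq_add t, h0, sub_eq_zero]

theorem ncard_setOf_monicCubic_eq_zero_eq_two [NoZeroDivisors R]
    (hm : IsCubicCriticalPoint a b m) (hne : 3 * m + a ≠ 0) (h0 : monicCubic a b c m = 0) :
    {t | monicCubic a b c t = 0}.ncard = 2 := by
  rw [hm.setOf_monicCubic_eq_zero h0]
  refine Set.ncard_pair fun h => hne ?_
  linear_combination h

end CommRing

section Field

variable {K : Type*} [Field K] {a b s : K}

theorem isCubicCriticalPoint_of_sq_eq (h3 : (3 : K) ≠ 0) (hs : s ^ 2 = a ^ 2 - 3 * b) :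
    IsCubicCriticalPoint a b ((-a + s) / 3) := by
  unfold IsCubicCriticalPoint
  field_simp
  linear_combination hs

theorem monicCubic_eq_of_sq_eq (h3 : (3 : K) ≠ 0) (hs : s ^ 2 = a ^ 2 - 3 * b) (c : K) :
    monicCubic a b c ((-a + s) / 3) = (2 * a ^ 3 - 9 * a * b - 2 * s ^ 3) / 27 + c := by
  have h27 : (27 : K) = 3 ^ 3 := by norm_num
  rw [monicCubic, h27]
  field_simp
  linear_combination 3 * s * hs

end Field

section Order

variable {R : Type*} [CommRing R] [LinearOrder R] [IsStrictOrderedRing R] {a b c : R}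

theorem monicCubic_neg_of_nonpos (ha : a ≤ 0) (hb : 0 ≤ b) (hc : c < 0) {t : R} (ht : t ≤ 0) :
    monicCubic a b c t < 0 := by
  have cube_nonpos : t ^ 3 ≤ 0 := Odd.pow_nonpos (by decide) ht
  have square_term : a * t ^ 2 ≤ 0 := mul_nonpos_of_nonpos_of_nonneg ha (sq_nonneg t)
  have linear_term : b * t ≤ 0 := mul_nonpos_of_nonneg_of_nonpos hb ht
  unfold monicCubic
  linarith

theorem setOf_pos_and_monicCubic_eq_zero (ha : a ≤ 0) (hb : 0 ≤ b) (hc : c < 0) :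
    {t | 0 < t ∧ monicCubic a b c t = 0} = {t | monicCubic a b c t = 0} :=
  Set.ext fun _ => and_iff_right_of_imp fun h0 =>
    not_le.mp fun ht => (monicCubic_neg_of_nonpos ha hb hc ht).ne h0

end Order

section Topology

theorem continuous_monicCubic {R : Type*} [CommRing R] [TopologicalSpace R] [IsTopologicalRing R]
    {a b c : R} : Continuous (monicCubic a b c) := by
  unfold monicCubic
  fun_prop

theorem exists_three_eq_of_alternating {X Y : Type*} [ConditionallyCompleteLinearOrder X]
    [DenselyOrdered X] [TopologicalSpace X] [OrderTopology X] [LinearOrder Y] [TopologicalSpace Y]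
    [OrderClosedTopology Y] {f : X → Y} (hf : Continuous f) {w x y z : X} {k : Y}
    (hwx : w < x) (hxy : x < y) (hyz : y < z)
    (hw : f w < k) (hx : k < f x) (hy : f y < k) (hz : k < f z) :
    ∃ u v r, u < v ∧ v < r ∧ f u = k ∧ f v = k ∧ f r = k := by
  obtain ⟨u, hu, hfu⟩ := intermediate_value_Ioo hwx.le hf.continuousOn ⟨hw, hx⟩
  obtain ⟨v, hv, hfv⟩ := intermediate_value_Ioo' hxy.le hf.continuousOn ⟨hy, hx⟩
  obtain ⟨r, hr, hfr⟩ := intermediate_value_Ioo hyz.le hf.continuousOn ⟨hy, hz⟩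
  exact ⟨u, v, r, hu.2.trans hv.1, hv.2.trans hr.1, hfu, hfv, hfr⟩

end Topology

theorem ncard_setOf_monicCubic_eq_zero_eq_three {a b c p q : ℝ} (hpq : p < q)
    (hp : IsCubicCriticalPoint a b p) (hq : IsCubicCriticalPoint a b q)
    (hpos : 0 < monicCubic a b c p) (hneg : monicCubic a b c q < 0) :
    {t | monicCubic a b c t = 0}.ncard = 3 := by
  have ha : 2 * a = -3 * (p + q) := hp.two_mul_eq hq hpq.ne
  have left_lt : -a - 2 * q < p := by linarith
  have lt_right : q < -a - 2 * p := by linarith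
  have left_neg : monicCubic a b c (-a - 2 * q) < 0 :=
    hq.monicCubic_neg_sub_two_mul.trans_lt hneg
  have right_pos : 0 < monicCubic a b c (-a - 2 * p) :=
    hpos.trans_eq hp.monicCubic_neg_sub_two_mul.symm
  obtain ⟨x, y, z, hxy, hyz, hx, hy, hz⟩ := exists_three_eq_of_alternating
    continuous_monicCubic left_lt hpq lt_right left_neg hpos hneg right_pos
  have hxz : x < z := hxy.trans hyz
  rw [setOf_monicCubic_eq_zero_of_roots hxy.ne hxz.ne hyz.ne hx hy hz]
  exact Set.ncard_eq_three.mpr ⟨x, y, z, hxy.ne, hxz.ne, hyz.ne, rfl⟩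

/-- with `D ≠ 0`, `B² + 12E > 0`, `B < 0`, `B² − 4E > 0`:
if `F₁ = 0` or `F₂ = 0` then the cubic `z³ + 2Bz² + (B² − 4E)z − D² = 0` has
exactly two solutions in `(0, ∞)`; if `F₁ > 0 > F₂` it has exactly three. -/
theorem stmt9 (B E D : ℝ) (hD : D ≠ 0)
    (h1 : 0 < B ^ 2 + 12 * E) (h2 : B < 0) (h3 : 0 < B ^ 2 - 4 * E) :
    let F₁ : ℝ := (-2 * B ^ 3 + 2 * (Real.sqrt (B ^ 2 + 12 * E)) ^ 3) / 27
        + 8 * E * B / 3 - D ^ 2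
    let F₂ : ℝ := (-2 * B ^ 3 - 2 * (Real.sqrt (B ^ 2 + 12 * E)) ^ 3) / 27
        + 8 * E * B / 3 - D ^ 2
    ((F₁ = 0 ∨ F₂ = 0) →
      {z : ℝ | 0 < z ∧ z ^ 3 + 2 * B * z ^ 2 + (B ^ 2 - 4 * E) * z - D ^ 2 = 0}.ncard = 2) ∧
    (F₁ > 0 ∧ 0 > F₂ →
      {z : ℝ | 0 < z ∧ z ^ 3 + 2 * B * z ^ 2 + (B ^ 2 - 4 * E) * z - D ^ 2 = 0}.ncard = 3) := by
  intro F₁ F₂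
  set s := √(B ^ 2 + 12 * E)
  have s_pos : 0 < s := Real.sqrt_pos.mpr h1
  have hs : s ^ 2 = (2 * B) ^ 2 - 3 * (B ^ 2 - 4 * E) := by linarith [Real.sq_sqrt h1.le]
  have hs' : (-s) ^ 2 = (2 * B) ^ 2 - 3 * (B ^ 2 - 4 * E) := by rw [neg_sq, hs]
  have critical₁ := isCubicCriticalPoint_of_sq_eq three_ne_zero hs'
  have critical₂ := isCubicCriticalPoint_of_sq_eq three_ne_zero hs
  have value₁ : monicCubic (2 * B) (B ^ 2 - 4 * E) (-D ^ 2) ((-(2 * B) + -s) / 3) = F₁ := by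
    rw [monicCubic_eq_of_sq_eq three_ne_zero hs']; ring
  have value₂ : monicCubic (2 * B) (B ^ 2 - 4 * E) (-D ^ 2) ((-(2 * B) + s) / 3) = F₂ := by
    rw [monicCubic_eq_of_sq_eq three_ne_zero hs]; ring
  have monic_form (z : ℝ) : z ^ 3 + 2 * B * z ^ 2 + (B ^ 2 - 4 * E) * z - D ^ 2 =
      monicCubic (2 * B) (B ^ 2 - 4 * E) (-D ^ 2) z := sub_eq_add_neg _ _
  have hD2 : -D ^ 2 < 0 := neg_neg_of_pos (sq_pos_of_ne_zero hD)
  simp only [monic_form, setOf_pos_and_monicCubic_eq_zero (by linarith : 2 * B ≤ 0) h3.le hD2]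
  refine ⟨?_, fun ⟨hpos, hneg⟩ => ?_⟩
  · rintro (h | h)
    · exact ncard_setOf_monicCubic_eq_zero_eq_two critical₁ (by linarith) (value₁.trans h)
    · exact ncard_setOf_monicCubic_eq_zero_eq_two critical₂ (by linarith) (value₂.trans h)
  · exact ncard_setOf_monicCubic_eq_zero_eq_three (by linarith)
      critical₁ critical₂ (hpos.trans_eq value₁.symm) (value₂.trans_lt hneg)
end

section
/- Let a, b, c, x ∈ ℍₛ satisfy ax² + bx + c = 0, and set T = x + x̄ = 2Re(x) ∈ ℝ and N = I_x ∈ ℝ. Then (Ta + b)x = aN − c. If, moreover, I_{Ta+b} ≠ 0 (equivalently T²I_a + 2T·P_{a,b} + I_b ≠ 0), then the pair (T, N) satisfies the two real equations −I_a·N² + N(T²I_a + 2T·P_{a,b} + I_b + 2P_{a,c}) − I_c = 0 and I_a·T³ + 2P_{a,b}·T² + (2P_{a,c} + I_b − 2I_a·N)T − 2N·P_{a,b} + 2P_{b,c} = 0. -/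
open Quaternion

/-- `P_{x,y} = x₀y₀ + x₁y₁ − x₂y₂ − x₃y₃ = Re(ȳx)`. -/
def SplitQuat.P (x y : ℍ[ℝ,-1,1]) : ℝ :=
  x.re * y.re + x.imI * y.imI - x.imJ * y.imJ - x.imK * y.imK

open SplitQuat

/-!
Since `x² = Tx - N`, the equation `ax² + bx + c = 0` is linear in disguise: `dx = e` with
`d = Ta + b` and `e = Na - c`. Multiplicativity of the norm form gives `I_d I_x = I_e`, and its
linearization at `x` and `1` gives `I_d T = 2 P_{e,d}`. Expanded, these are the two scalar
equations.
-/

section NormForm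

open QuadraticMap (polar)

variable {R A : Type*} [CommRing R]

/-- `n` is a norm form on the possibly nonassociative algebra `A`, as for quaternion and octonion
algebras: it is multiplicative, and every element `x` is a root of its characteristic polynomial
`X² - polar n x 1 • X + n x`, the trace being encoded as `polar n x 1`. -/
structure IsCompositionNorm [NonAssocRing A] [Module R A] (n : QuadraticForm R A) : Prop where
  map_mul (x y : A) : n (x * y) = n x * n y
  mul_self (x : A) : x * x = polar n x 1 • x - n x • (1 : A)

theorem quadraticForm_map_smul_add [AddCommGroup A] [Module R A] (n : QuadraticForm R A) (r : R)
    (a b : A) : n (r • a + b) = r ^ 2 * n a + r * polar n a b + n b := by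
  rw [QuadraticMap.map_add n, n.map_smul, n.polar_smul_left, smul_eq_mul, smul_eq_mul]
  ring

theorem quadraticForm_map_smul_sub [AddCommGroup A] [Module R A] (n : QuadraticForm R A) (r : R)
    (a b : A) : n (r • a - b) = r ^ 2 * n a - r * polar n a b + n b := by
  rw [sub_eq_add_neg, quadraticForm_map_smul_add, n.polar_neg_right, n.map_neg]
  ring

theorem polar_smul_sub_smul_add [AddCommGroup A] [Module R A] (n : QuadraticForm R A) (r s : R)
    (a b c : A) : polar n (s • a - c) (r • a + b) =
      2 * r * s * n a + s * polar n a b - r * polar n a c - polar n b c := by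
  simp only [n.polar_sub_left, n.polar_add_right, n.polar_smul_left, n.polar_smul_right,
    n.polar_self, QuadraticMap.polar_comm n c, smul_eq_mul, nsmul_eq_mul, Nat.cast_ofNat]
  ring

namespace IsCompositionNorm

variable [NonAssocRing A] [Module R A] {n : QuadraticForm R A}

theorem polar_mul_left (hn : IsCompositionNorm n) (d x y : A) :
    polar n (d * x) (d * y) = n d * polar n x y := by
  simp only [polar, ← mul_add, hn.map_mul, mul_sub]

theorem polar_mul_self_left (hn : IsCompositionNorm n) (d x : A) :
    polar n (d * x) d = n d * polar n x 1 := by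
  simpa only [mul_one] using hn.polar_mul_left d x 1

theorem trace_smul_add_mul_eq [IsScalarTower R A A] [SMulCommClass R A A]
    (hn : IsCompositionNorm n) {a b c x : A} (h : a * (x * x) + b * x + c = 0) :
    (polar n x 1 • a + b) * x = n x • a - c := by
  rw [hn.mul_self, mul_sub, mul_smul_comm, mul_smul_comm, mul_one] at h
  rw [add_mul, smul_mul_assoc, eq_sub_iff_add_eq, ← sub_eq_zero, ← h]
  abel

end IsCompositionNorm

theorem stmt12_general [NonAssocRing A] [Module R A] [IsScalarTower R A A] [SMulCommClass R A A]
    {n : QuadraticForm R A} (hn : IsCompositionNorm n) {a b c x : A}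
    (h : a * (x * x) + b * x + c = 0) :
    let T : R := polar n x 1
    let N : R := n x
    (T • a + b) * x = N • a - c ∧
    n (T • a + b) = T ^ 2 * n a + T * polar n a b + n b ∧
    -n a * N ^ 2 + N * (T ^ 2 * n a + T * polar n a b + n b + polar n a c) - n c = 0 ∧
    n a * T ^ 3 + polar n a b * T ^ 2 + (polar n a c + n b - 2 * n a * N) * T
      - N * polar n a b + polar n b c = 0 := by
  intro T N
  have linear : (T • a + b) * x = N • a - c := hn.trace_smul_add_mul_eq h
  have norm_d := quadraticForm_map_smul_add n T a b
  have norm_eq : n (T • a + b) * N = n (N • a - c) := by rw [← linear, hn.map_mul]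
  have trace_eq : n (T • a + b) * T = polar n (N • a - c) (T • a + b) := by
    rw [← linear, hn.polar_mul_self_left]
  rw [norm_d, quadraticForm_map_smul_sub] at norm_eq
  rw [norm_d, polar_smul_sub_smul_add] at trace_eq
  exact ⟨linear, norm_d, by linear_combination norm_eq, by linear_combination trace_eq⟩

end NormForm

section Quaternion

open QuadraticMap (polar)

variable {R : Type*} [CommRing R] {c₁ c₂ c₃ : R}

/-- The pairing `(x, y) ↦ Re(ȳx)` on a quaternion algebra, whose diagonal is the reduced
norm; for split quaternions it is `P`. -/
def quaternionPairing : LinearMap.BilinForm R ℍ[R,c₁,c₂,c₃] :=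
  LinearMap.mk₂ R (fun x y ↦ (star y * x).re)
    (fun x x' y ↦ by rw [mul_add, QuaternionAlgebra.re_add])
    (fun r x y ↦ by rw [mul_smul_comm, QuaternionAlgebra.re_smul])
    (fun x y y' ↦ by rw [star_add, add_mul, QuaternionAlgebra.re_add])
    (fun r x y ↦ by rw [QuaternionAlgebra.star_smul, smul_mul_assoc, QuaternionAlgebra.re_smul])

/-- The reduced norm `x ↦ x̄x` of a quaternion algebra, as a quadratic form. -/
def quaternionNorm : QuadraticForm R ℍ[R,c₁,c₂,c₃] :=
  quaternionPairing.toQuadraticMap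

theorem quaternionPairing_apply (x y : ℍ[R,c₁,c₂,c₃]) :
    quaternionPairing x y = (star y * x).re := rfl

theorem polar_quaternionNorm (x y : ℍ[R,c₁,c₂,c₃]) :
    polar quaternionNorm x y = quaternionPairing x y + quaternionPairing y x :=
  LinearMap.BilinMap.polar_toQuadraticMap x y

theorem coe_quaternionNorm (x : ℍ[R,c₁,c₂,c₃]) :
    ((quaternionNorm x : R) : ℍ[R,c₁,c₂,c₃]) = star x * x :=
  x.star_mul_eq_coe.symm

theorem coe_polar_quaternionNorm_one (x : ℍ[R,c₁,c₂,c₃]) :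
    ((polar quaternionNorm x 1 : R) : ℍ[R,c₁,c₂,c₃]) = x + star x := by
  rw [polar_quaternionNorm, quaternionPairing_apply, quaternionPairing_apply, star_one, one_mul,
    mul_one, QuaternionAlgebra.self_add_star', QuaternionAlgebra.re_star]
  ring_nf

theorem isCompositionNorm_quaternionNorm :
    IsCompositionNorm (quaternionNorm : QuadraticForm R ℍ[R,c₁,c₂,c₃]) where
  map_mul x y := by
    apply QuaternionAlgebra.coe_injective (c₁ := c₁) (c₂ := c₂) (c₃ := c₃)
    calc ((quaternionNorm (x * y) : R) : ℍ[R,c₁,c₂,c₃])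
        = star y * (star x * x) * y := by simp only [coe_quaternionNorm, star_mul, mul_assoc]
      _ = star x * x * (star y * y) := by
        rw [← coe_quaternionNorm x, ← QuaternionAlgebra.coe_commutes, mul_assoc]
      _ = ↑(quaternionNorm x * quaternionNorm y) := by
        simp only [QuaternionAlgebra.coe_mul, coe_quaternionNorm]
  mul_self x := by
    rw [← QuaternionAlgebra.coe_mul_eq_smul, ← QuaternionAlgebra.coe_mul_eq_smul,
      coe_polar_quaternionNorm_one, coe_quaternionNorm, mul_one, add_mul, add_sub_cancel_right]

end Quaternion

namespace SplitQuat

open QuadraticMap (polar)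

theorem quaternionPairing_eq_P (x y : ℍ[ℝ,-1,1]) : quaternionPairing x y = P x y := by
  simp only [quaternionPairing_apply, P, QuaternionAlgebra.re_mul, QuaternionAlgebra.re_star,
    QuaternionAlgebra.imI_star, QuaternionAlgebra.imJ_star, QuaternionAlgebra.imK_star]
  ring

theorem quaternionNorm_eq_Ix (x : ℍ[ℝ,-1,1]) : quaternionNorm x = Ix x := by
  change quaternionPairing x x = Ix x
  rw [quaternionPairing_eq_P, P, Ix]
  ring

theorem P_comm (x y : ℍ[ℝ,-1,1]) : P x y = P y x := by
  simp only [P, mul_comm]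

theorem polar_quaternionNorm_eq (x y : ℍ[ℝ,-1,1]) : polar quaternionNorm x y = 2 * P x y := by
  rw [polar_quaternionNorm, quaternionPairing_eq_P, quaternionPairing_eq_P, P_comm y x, two_mul]

theorem P_one_right (x : ℍ[ℝ,-1,1]) : P x 1 = x.re := by
  simp [P]

end SplitQuat

/-- if `ax² + bx + c = 0` and `T = 2 Re x`, `N = I_x`, then
`(Ta + b)x = aN − c`; if moreover `I_{Ta+b} ≠ 0` (equivalently
`T²I_a + 2T P_{a,b} + I_b ≠ 0`), then `(T, N)` solves the two real equations
of system (18). -/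
theorem stmt12 (a b c x : ℍ[ℝ,-1,1]) (h : a * x ^ 2 + b * x + c = 0) :
    let T : ℝ := 2 * x.re
    let N : ℝ := Ix x
    (((T : ℝ) : ℍ[ℝ,-1,1]) * a + b) * x = a * ((N : ℝ) : ℍ[ℝ,-1,1]) - c ∧
    (Ix (((T : ℝ) : ℍ[ℝ,-1,1]) * a + b) ≠ 0 ↔
      T ^ 2 * Ix a + 2 * T * P a b + Ix b ≠ 0) ∧
    (Ix (((T : ℝ) : ℍ[ℝ,-1,1]) * a + b) ≠ 0 →
      -Ix a * N ^ 2 + N * (T ^ 2 * Ix a + 2 * T * P a b + Ix b + 2 * P a c) - Ix c = 0 ∧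
      Ix a * T ^ 3 + 2 * P a b * T ^ 2 + (2 * P a c + Ix b - 2 * Ix a * N) * T
        - 2 * N * P a b + 2 * P b c = 0) := by
  rw [sq] at h
  obtain ⟨linear, norm_d, norm_eq, trace_eq⟩ := stmt12_general isCompositionNorm_quaternionNorm h
  simp only [polar_quaternionNorm_eq, quaternionNorm_eq_Ix, P_one_right]
    at linear norm_d norm_eq trace_eq
  simp only [QuaternionAlgebra.coe_mul_eq_smul, QuaternionAlgebra.mul_coe_eq_smul]
  exact ⟨linear, by rw [norm_d]; ring_nf, fun _ ↦
    ⟨by linear_combination norm_eq, by linear_combination trace_eq⟩⟩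
end

section
/- Let a = 1 + a₂j + a₃k ∈ ℍₛ with a₂² + a₃² = 1 (so that I_a = 0 and a is a nonzero zero divisor), and let c ∈ ℍₛ. Then there exists x ∈ ℍₛ with ax² + c = 0 if and only if ac = 2c. -/
open Quaternion

/-!
Write `a = 2e` with `e` idempotent. The values of `x ↦ e * x ^ 2` lie in the right ideal
`{d | e * d = d}`, and they fill it as soon as `e` behaves like the matrix unit `E₁₁`: if
`v = E₁₂` and `w = E₂₁`, then `x = v + w * d` is the companion matrix `[[0, 1], [d₁, d₂]]`, and the
first row of its square is the first row `(d₁, d₂)` of `d`. For quaternions, `v = e * i` and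
`w = i⁻¹ * e` are such matrix units because `i` anticommutes with `a₂j + a₃k`.
-/

section NoncommutativeRing

theorem exists_mul_mul_sq_eq_iff {S : Type*} [Semiring S] {v w : S} (hv : v * v = 0)
    (hw : w * w = 0) (hvwv : v * w * v = v) (d : S) :
    (∃ x, v * w * x ^ 2 = d) ↔ v * w * d = d := by
  constructor
  · rintro ⟨x, rfl⟩
    rw [← mul_assoc, ← mul_assoc, hvwv]
  · intro hd
    have hvwx : v * w * (v + w * d) = v := by
      rw [mul_add, hvwv, ← mul_assoc, mul_assoc v w w, hw, mul_zero, zero_mul, add_zero]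
    refine ⟨v + w * d, ?_⟩
    calc v * w * (v + w * d) ^ 2 = v * (v + w * d) := by rw [sq, ← mul_assoc, hvwx]
      _ = d := by rw [mul_add, hv, zero_add, ← mul_assoc, hd]

variable {S : Type*} [Ring S]

theorem exists_mul_sq_eq_iff_of_semiconjBy_one_sub {e s : S} (he : IsIdempotentElem e)
    (hs : IsUnit s) (hse : SemiconjBy s e (1 - e)) (d : S) :
    (∃ x, e * x ^ 2 = d) ↔ e * d = d := by
  obtain ⟨s, rfl⟩ := hs
  have hse_inv : SemiconjBy (↑s⁻¹ : S) (1 - e) e := hse.units_inv_symm_left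
  have hvw : e * s * (↑s⁻¹ * e) = e := by
    rw [mul_assoc, Units.mul_inv_cancel_left, he.eq]
  have hv : e * s * (e * s) = 0 := by
    rw [mul_assoc, ← mul_assoc (s : S), hse.eq, ← mul_assoc, ← mul_assoc, he.mul_one_sub_self,
      zero_mul, zero_mul]
  have hw : ↑s⁻¹ * e * (↑s⁻¹ * e) = 0 := by
    rw [mul_assoc, ← mul_assoc e, ← hse_inv.eq, mul_assoc, he.one_sub_mul_self, mul_zero, mul_zero]
  have hvwv : e * s * (↑s⁻¹ * e) * (e * s) = e * s := by
    rw [hvw, ← mul_assoc, he.eq]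
  simpa only [hvw] using exists_mul_mul_sq_eq_iff hv hw hvwv d

variable [Invertible (2 : S)] {u : S}

theorem isIdempotentElem_invOf_two_mul_one_add (hu : u * u = 1) :
    IsIdempotentElem (⅟2 * (1 + u)) := by
  have hsq : (1 + u) * (1 + u) = 2 * (1 + u) := by
    rw [mul_add, add_mul, add_mul, hu, one_mul, one_mul, mul_one, add_comm u 1, two_mul]
  have hcomm : Commute (1 + u) (⅟2) := (Commute.ofNat_right _ 2).invOf_right
  rw [IsIdempotentElem, hcomm.mul_mul_mul_comm, hsq, mul_assoc, invOf_mul_cancel_left]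

theorem semiconjBy_invOf_two_mul_one_add {s : S} (hsu : SemiconjBy s u (-u)) :
    SemiconjBy s (⅟2 * (1 + u)) (1 - ⅟2 * (1 + u)) := by
  have hcompl : 1 - ⅟2 * (1 + u) = ⅟2 * (1 + -u) := by
    rw [sub_eq_iff_eq_add, ← mul_add, add_add_add_comm, neg_add_cancel, add_zero,
      one_add_one_eq_two, invOf_mul_self]
  have hcomm : Commute s (⅟2) := (Commute.ofNat_right _ 2).invOf_right
  rw [hcompl]
  exact SemiconjBy.mul_right hcomm ((SemiconjBy.one_right s).add_right hsu)

theorem exists_one_add_mul_sq_add_eq_zero_iff {s : S} (hu : u * u = 1) (hs : IsUnit s)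
    (hsu : SemiconjBy s u (-u)) (c : S) :
    (∃ x, (1 + u) * x ^ 2 + c = 0) ↔ (1 + u) * c = 2 * c := by
  have hscale (x : S) : (1 + u) * x ^ 2 + c = 0 ↔ ⅟2 * (1 + u) * x ^ 2 = ⅟2 * -c := by
    rw [add_eq_zero_iff_eq_neg, mul_assoc, mul_right_inj_of_invertible]
  have hcomm : Commute (1 + u) (⅟2) := (Commute.ofNat_right _ 2).invOf_right
  calc (∃ x, (1 + u) * x ^ 2 + c = 0)
      ↔ ⅟2 * (1 + u) * (⅟2 * -c) = ⅟2 * -c := by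
        rw [exists_congr hscale]
        exact exists_mul_sq_eq_iff_of_semiconjBy_one_sub
          (isIdempotentElem_invOf_two_mul_one_add hu) hs (semiconjBy_invOf_two_mul_one_add hsu) _
    _ ↔ ⅟2 * ((1 + u) * c) = c := by
        rw [mul_assoc, mul_right_inj_of_invertible, ← mul_assoc, hcomm.eq, mul_assoc, mul_neg,
          mul_neg, neg_inj]
    _ ↔ (1 + u) * c = 2 * c := invOf_mul_eq_iff_eq_mul_left

end NoncommutativeRing

section GeneralizedQuaternion

variable {R : Type*} [CommRing R] {c₁ c₂ : R}

theorem isUnit_quaternionAlgebra_i (hc₁ : IsUnit c₁) : IsUnit (⟨0, 1, 0, 0⟩ : ℍ[R,c₁,c₂]) := by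
  have hsq : (⟨0, 1, 0, 0⟩ : ℍ[R,c₁,c₂]) * ⟨0, 1, 0, 0⟩ = algebraMap R _ c₁ := by
    ext <;> simp
  rw [← isUnit_mul_self_iff, hsq]
  exact hc₁.map _

theorem semiconjBy_quaternionAlgebra_i_jk (a₂ a₃ : R) :
    SemiconjBy (⟨0, 1, 0, 0⟩ : ℍ[R,c₁,c₂]) ⟨0, 0, a₂, a₃⟩ (-⟨0, 0, a₂, a₃⟩) := by
  rw [SemiconjBy]
  ext <;> simp

theorem quaternionAlgebra_jk_mul_self (a₂ a₃ : R) :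
    (⟨0, 0, a₂, a₃⟩ : ℍ[R,c₁,c₂]) * ⟨0, 0, a₂, a₃⟩ =
      (↑(c₂ * (a₂ ^ 2 - c₁ * a₃ ^ 2)) : ℍ[R,c₁,c₂]) := by
  rw [QuaternionAlgebra.mk_mul_mk]
  ext <;> simp only [QuaternionAlgebra.re_coe, QuaternionAlgebra.imI_coe,
    QuaternionAlgebra.imJ_coe, QuaternionAlgebra.imK_coe] <;> ring

theorem stmt14_general [Invertible (2 : R)] (hc₁ : IsUnit c₁) (a₂ a₃ : R)
    (ha : c₂ * (a₂ ^ 2 - c₁ * a₃ ^ 2) = 1) (c : ℍ[R,c₁,c₂]) :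
    let a : ℍ[R,c₁,c₂] := ⟨1, 0, a₂, a₃⟩
    (∃ x : ℍ[R,c₁,c₂], a * x ^ 2 + c = 0) ↔ a * c = 2 * c := by
  intro a
  have ha_eq : a = 1 + ⟨0, 0, a₂, a₃⟩ := by ext <;> simp [a]
  have hu : (⟨0, 0, a₂, a₃⟩ : ℍ[R,c₁,c₂]) * ⟨0, 0, a₂, a₃⟩ = 1 := by
    rw [quaternionAlgebra_jk_mul_self, ha, QuaternionAlgebra.coe_one]
  have : Invertible (2 : ℍ[R,c₁,c₂]) :=
    (Invertible.map (algebraMap R ℍ[R,c₁,c₂]) 2).copy 2 (map_ofNat _ 2).symm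
  rw [ha_eq]
  exact exists_one_add_mul_sq_add_eq_zero_iff hu (isUnit_quaternionAlgebra_i hc₁)
    (semiconjBy_quaternionAlgebra_i_jk a₂ a₃) c

end GeneralizedQuaternion

/-- for `a = 1 + a₂j + a₃k` with `a₂² + a₃² = 1` (a nonzero zero
divisor) and any `c`, the equation `ax² + c = 0` has a solution iff `ac = 2c`. -/
theorem stmt14 (a₂ a₃ : ℝ) (ha : a₂ ^ 2 + a₃ ^ 2 = 1) (c : ℍ[ℝ,-1,1]) :
    let a : ℍ[ℝ,-1,1] := ⟨1, 0, a₂, a₃⟩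
    (∃ x : ℍ[ℝ,-1,1], a * x ^ 2 + c = 0) ↔ a * c = 2 * c :=
  have : Invertible (2 : ℝ) := invertibleOfNonzero two_ne_zero
  stmt14_general isUnit_one.neg a₂ a₃ (by linear_combination ha) c
end

section
/- Let a = 1 + a₂j + a₃k ∈ ℍₛ with a₂² + a₃² = 1, and let c = c₀ + c₂j + c₃k ∈ ℍₛ (i.e. the i-coefficient of c is zero) satisfy ac = 2c. Then: (1) every x = x₁i + x₂j + x₃k with x₁,x₂,x₃ ∈ ℝ and −x₁² + x₂² + x₃² + c₀ = 0 satisfies ax² + c = 0; and (2) if additionally c₀ ≤ 0, then for all x₂, x₃ ∈ ℝ and each choice of sign, x = (±√(−c₀) − a₂x₂ − a₃x₃) + (a₂x₃ − a₃x₂)i + x₂j + x₃k satisfies ax² + c = 0. -/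
open Quaternion

/-!
Comparing the `j`- and `k`-coordinates of `ac = 2c` gives `c = c₀a`, so the equation becomes
`ax² = -c₀a`. A purely imaginary `x` satisfies `star x = -x`, so `x²` is minus the norm of `x`,
a scalar, and the condition on its coordinates says `x² = -c₀`. For the second family, `a` has
norm zero, that is `a * star a = 0`: whenever `s² = -c₀`, every `x = s + star a * w` satisfies
`ax = sa`, hence `ax² = s²a = -c₀a`. The given solutions are those with `w = x₂j + x₃k`.
-/

theorem mul_sq_eq_sq_smul_of_mul_eq_smul {R A : Type*} [Monoid R] [Monoid A] [MulAction R A]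
    [IsScalarTower R A A] {a x : A} {s : R} (h : a * x = s • a) : a * x ^ 2 = s ^ 2 • a := by
  rw [sq, ← mul_assoc, h, smul_mul_assoc, h, smul_smul, sq]

theorem mul_algebraMap_add_mul_eq_smul {R A : Type*} [CommSemiring R] [Semiring A] [Algebra R A]
    {a b : A} (h : a * b = 0) (s : R) (w : A) : a * (algebraMap R A s + b * w) = s • a := by
  rw [mul_add, ← mul_assoc, h, zero_mul, add_zero, ← Algebra.commutes, Algebra.smul_def]

theorem mul_sqrt_sq_of_eq_one_or_eq_neg_one {ε y : ℝ} (hε : ε = 1 ∨ ε = -1) (hy : 0 ≤ y) :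
    (ε * √y) ^ 2 = y := by
  rw [mul_pow, Real.sq_sqrt hy, sq_eq_one_iff.2 hε, one_mul]

section QuaternionAlgebra

variable {R : Type*} [CommRing R] {α β : R}

theorem quaternionAlgebra_re_mul_star (q : ℍ[R,α,β]) :
    (q * star q).re = q.re ^ 2 - α * q.imI ^ 2 - β * q.imJ ^ 2 + α * β * q.imK ^ 2 := by
  simp only [QuaternionAlgebra.re_mul, QuaternionAlgebra.re_star, QuaternionAlgebra.imI_star,
    QuaternionAlgebra.imJ_star, QuaternionAlgebra.imK_star]
  ring

theorem quaternionAlgebra_mk_zero_sq_s15 (x₁ x₂ x₃ : R) :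
    (⟨0, x₁, x₂, x₃⟩ : ℍ[R,α,β]) ^ 2 =
      ((α * x₁ ^ 2 + β * x₂ ^ 2 - α * β * x₃ ^ 2 : R) : ℍ[R,α,β]) := by
  have star_eq_neg : star (⟨0, x₁, x₂, x₃⟩ : ℍ[R,α,β]) = -⟨0, x₁, x₂, x₃⟩ := by simp
  rw [sq, ← neg_neg (_ * _), ← mul_neg, ← star_eq_neg, QuaternionAlgebra.mul_star_eq_coe,
    quaternionAlgebra_re_mul_star, ← QuaternionAlgebra.coe_neg]
  congr 1
  ring

theorem algebraMap_add_star_mul_eq_mk (a₂ a₃ s x₂ x₃ : R) :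
    algebraMap R ℍ[R,α,β] s + star (⟨1, 0, a₂, a₃⟩ : ℍ[R,α,β]) * ⟨0, 0, x₂, x₃⟩ =
      ⟨s - β * a₂ * x₂ + α * β * a₃ * x₃, β * (a₂ * x₃ - a₃ * x₂), x₂, x₃⟩ := by
  rw [QuaternionAlgebra.coe_algebraMap, QuaternionAlgebra.coe, QuaternionAlgebra.star_mk,
    QuaternionAlgebra.mk_mul_mk, QuaternionAlgebra.mk_add_mk]
  congr 1 <;> ring

theorem eq_smul_of_mul_eq_two_mul {a₂ a₃ c₀ c₂ c₃ : R}
    (h : (⟨1, 0, a₂, a₃⟩ : ℍ[R,α,β]) * ⟨c₀, 0, c₂, c₃⟩ = 2 * ⟨c₀, 0, c₂, c₃⟩) :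
    (⟨c₀, 0, c₂, c₃⟩ : ℍ[R,α,β]) = c₀ • ⟨1, 0, a₂, a₃⟩ := by
  rw [two_mul] at h
  have hJ : c₂ + a₂ * c₀ = c₂ + c₂ := by simpa using congrArg QuaternionAlgebra.imJ h
  have hK : c₃ + a₃ * c₀ = c₃ + c₃ := by simpa using congrArg QuaternionAlgebra.imK h
  ext
  · simp
  · simp
  · simpa using by linear_combination -hJ
  · simpa using by linear_combination -hK

theorem stmt15_general {a₂ a₃ c₀ c₂ c₃ : R}
    (hac : (⟨1, 0, a₂, a₃⟩ : ℍ[R,α,β]) * ⟨c₀, 0, c₂, c₃⟩ = 2 * ⟨c₀, 0, c₂, c₃⟩) :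
    (∀ x₁ x₂ x₃ : R, α * x₁ ^ 2 + β * x₂ ^ 2 - α * β * x₃ ^ 2 + c₀ = 0 →
      (⟨1, 0, a₂, a₃⟩ : ℍ[R,α,β]) * ⟨0, x₁, x₂, x₃⟩ ^ 2 + ⟨c₀, 0, c₂, c₃⟩ = 0) ∧
    (β * a₂ ^ 2 - α * β * a₃ ^ 2 = 1 → ∀ s : R, s ^ 2 = -c₀ → ∀ x₂ x₃ : R,
      (⟨1, 0, a₂, a₃⟩ : ℍ[R,α,β]) *
          ⟨s - β * a₂ * x₂ + α * β * a₃ * x₃, β * (a₂ * x₃ - a₃ * x₂), x₂, x₃⟩ ^ 2 +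
        ⟨c₀, 0, c₂, c₃⟩ = 0) := by
  rw [eq_smul_of_mul_eq_two_mul hac]
  refine ⟨fun x₁ x₂ x₃ hx => ?_, fun ha s hs x₂ x₃ => ?_⟩
  · rw [quaternionAlgebra_mk_zero_sq_s15, QuaternionAlgebra.mul_coe_eq_smul, ← add_smul, hx, zero_smul]
  · have mul_star_eq_zero : (⟨1, 0, a₂, a₃⟩ : ℍ[R,α,β]) * star ⟨1, 0, a₂, a₃⟩ = 0 := by
      rw [QuaternionAlgebra.mul_star_eq_coe, quaternionAlgebra_re_mul_star,
        ← QuaternionAlgebra.coe_zero]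
      congr 1
      linear_combination -ha
    rw [← algebraMap_add_star_mul_eq_mk,
      mul_sq_eq_sq_smul_of_mul_eq_smul (mul_algebraMap_add_mul_eq_smul mul_star_eq_zero s _),
      hs, ← add_smul, neg_add_cancel, zero_smul]

end QuaternionAlgebra

/-- explicit solutions of `ax² + c = 0` for
`a = 1 + a₂j + a₃k` (`a₂² + a₃² = 1`) and `c = c₀ + c₂j + c₃k` with `ac = 2c`:
(1) every purely imaginary `x = x₁i + x₂j + x₃k` with
`−x₁² + x₂² + x₃² + c₀ = 0` is a solution; (2) if `c₀ ≤ 0`, then for all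
`x₂, x₃` and either sign, `x = (±√(−c₀) − a₂x₂ − a₃x₃) + (a₂x₃ − a₃x₂)i + x₂j + x₃k`
is a solution. -/
theorem stmt15 (a₂ a₃ c₀ c₂ c₃ : ℝ) (ha : a₂ ^ 2 + a₃ ^ 2 = 1)
    (hac : (⟨1, 0, a₂, a₃⟩ : ℍ[ℝ,-1,1]) * (⟨c₀, 0, c₂, c₃⟩ : ℍ[ℝ,-1,1])
      = 2 * (⟨c₀, 0, c₂, c₃⟩ : ℍ[ℝ,-1,1])) :
    let a : ℍ[ℝ,-1,1] := ⟨1, 0, a₂, a₃⟩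
    let c : ℍ[ℝ,-1,1] := ⟨c₀, 0, c₂, c₃⟩
    (∀ x₁ x₂ x₃ : ℝ, -x₁ ^ 2 + x₂ ^ 2 + x₃ ^ 2 + c₀ = 0 →
      a * (⟨0, x₁, x₂, x₃⟩ : ℍ[ℝ,-1,1]) ^ 2 + c = 0) ∧
    (c₀ ≤ 0 → ∀ x₂ x₃ : ℝ, ∀ ε : ℝ, (ε = 1 ∨ ε = -1) →
      a * (⟨ε * Real.sqrt (-c₀) - a₂ * x₂ - a₃ * x₃,
            a₂ * x₃ - a₃ * x₂, x₂, x₃⟩ : ℍ[ℝ,-1,1]) ^ 2 + c = 0) := by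
  have general := stmt15_general hac
  exact ⟨fun x₁ x₂ x₃ hx => general.1 x₁ x₂ x₃ (by linear_combination hx),
    fun hc x₂ x₃ ε hε => by
      simpa [sub_eq_add_neg] using general.2 (by linear_combination ha) _
        (mul_sqrt_sq_of_eq_one_or_eq_neg_one hε (neg_nonneg.2 hc)) x₂ x₃⟩
end

section
/- Let a = 1 + a₂j + a₃k with a₂² + a₃² = 1, let b = b₁i + b₂j + b₃k with a₂b₂ + a₃b₃ = 0 (equivalently P_{a,b} = 0), and let c = c₀ + c₁i + c₂j + c₃k ∈ ℍₛ. Set δ = a₂b₃ − a₃b₂ + b₁, t₁ = c₂ − c₀a₂ − a₃c₁, t₂ = c₃ − c₀a₃ + a₂c₁. If x = x₀ + x₁i + x₂j + x₃k ∈ ℍₛ satisfies ax² + bx + c = 0, then (b₂ − a₃b₁)x₀ + (a₂b₁ + b₃)x₁ − δx₃ + t₁ = 0 and (a₂b₁ + b₃)x₀ + (a₃b₁ − b₂)x₁ + δx₂ + t₂ = 0. -/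
open Quaternion

/-!
Since `P_{a,a} = 0`, the conjugate `star a` annihilates `a` from the left, so multiplying the
equation by `star a` kills the quadratic term and leaves the linear equation
`(star a * b) * x + star a * c = 0`. Its coefficient `star a * b` has real part `P_{a,b} = 0`, and
the two asserted relations are the `j` and `k` coordinates of that equation.
-/

theorem mul_mul_add_mul_eq_zero_of_mul_eq_zero {A : Type*} [NonUnitalSemiring A]
    {d a b c x y : A} (hda : d * a = 0) (h : a * y + b * x + c = 0) : d * b * x + d * c = 0 :=
  calc d * b * x + d * c = d * a * y + d * b * x + d * c := by rw [hda, zero_mul, zero_add]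
    _ = d * (a * y + b * x + c) := by simp only [mul_add, mul_assoc]
    _ = 0 := by rw [h, mul_zero]

section NormPairing

variable {R : Type*} [CommRing R] {p q : R}

/-- The symmetric bilinear form `P_{x,y}` whose diagonal is the norm form of the quaternion algebra.
It is encoded as the real part of `star x * y` so as to make sense in every `ℍ[R,p,q]`. -/
def normPairing (x y : ℍ[R,p,q]) : R :=
  (star x * y).re

theorem normPairing_split (x y : ℍ[R,-1,1]) :
    normPairing x y = x.re * y.re + x.imI * y.imI - x.imJ * y.imJ - x.imK * y.imK := by
  simp only [normPairing, QuaternionAlgebra.re_mul, QuaternionAlgebra.re_star,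
    QuaternionAlgebra.imI_star, QuaternionAlgebra.imJ_star, QuaternionAlgebra.imK_star]
  ring

theorem star_mul_self_eq_zero_of_normPairing_eq_zero {a : ℍ[R,p,q]} (ha : normPairing a a = 0) :
    star a * a = 0 := by
  rw [a.star_mul_eq_coe, ← normPairing, ha, QuaternionAlgebra.coe_zero]

theorem stmt16_general {a b c x : ℍ[R,p,q]} (ha : normPairing a a = 0) (hab : normPairing a b = 0)
    (hx : a * x ^ 2 + b * x + c = 0) :
    let d := star a * b
    let t := star a * c
    d.imJ * x.re - p * d.imK * x.imI + p * d.imI * x.imK + t.imJ = 0 ∧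
    d.imK * x.re - d.imJ * x.imI + d.imI * x.imJ + t.imK = 0 := by
  intro d t
  have hd : d.re = 0 := hab
  have hlin : d * x + t = 0 :=
    mul_mul_add_mul_eq_zero_of_mul_eq_zero (star_mul_self_eq_zero_of_normPairing_eq_zero ha) hx
  have hJ : (d * x + t).imJ = 0 := by rw [hlin, QuaternionAlgebra.imJ_zero]
  have hK : (d * x + t).imK = 0 := by rw [hlin, QuaternionAlgebra.imK_zero]
  rw [QuaternionAlgebra.imJ_add, QuaternionAlgebra.imJ_mul, hd] at hJ
  rw [QuaternionAlgebra.imK_add, QuaternionAlgebra.imK_mul, hd] at hK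
  constructor
  · linear_combination hJ
  · linear_combination hK

end NormPairing

/-- Proposition 5.1: for `a = 1 + a₂j + a₃k` with
`a₂² + a₃² = 1`, `b = b₁i + b₂j + b₃k` with `a₂b₂ + a₃b₃ = 0` (i.e.
`P_{a,b} = 0`), any solution `x` of `ax² + bx + c = 0` satisfies the two linear
relations with `δ = a₂b₃ − a₃b₂ + b₁`, `t₁ = c₂ − c₀a₂ − a₃c₁`,
`t₂ = c₃ − c₀a₃ + a₂c₁`. -/
theorem stmt16 (a₂ a₃ b₁ b₂ b₃ c₀ c₁ c₂ c₃ : ℝ)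
    (ha : a₂ ^ 2 + a₃ ^ 2 = 1) (hab : a₂ * b₂ + a₃ * b₃ = 0)
    (x : ℍ[ℝ,-1,1])
    (hx : (⟨1, 0, a₂, a₃⟩ : ℍ[ℝ,-1,1]) * x ^ 2
        + (⟨0, b₁, b₂, b₃⟩ : ℍ[ℝ,-1,1]) * x + (⟨c₀, c₁, c₂, c₃⟩ : ℍ[ℝ,-1,1]) = 0) :
    let δ : ℝ := a₂ * b₃ - a₃ * b₂ + b₁
    let t₁ : ℝ := c₂ - c₀ * a₂ - a₃ * c₁
    let t₂ : ℝ := c₃ - c₀ * a₃ + a₂ * c₁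
    (b₂ - a₃ * b₁) * x.re + (a₂ * b₁ + b₃) * x.imI - δ * x.imK + t₁ = 0 ∧
    (a₂ * b₁ + b₃) * x.re + (a₃ * b₁ - b₂) * x.imI + δ * x.imJ + t₂ = 0 := by
  have h := stmt16_general (by rw [normPairing_split]; linear_combination -ha)
    (by rw [normPairing_split]; linear_combination -hab) hx
  simp only [QuaternionAlgebra.star_mk, QuaternionAlgebra.mk_mul_mk] at h
  exact ⟨by linear_combination h.1, by linear_combination h.2⟩
end

section
/- Let a = 1 + a₂j + a₃k with a₂² + a₃² = 1, let b = b₁i + b₂j + b₃k ≠ 0 with a₂b₂ + a₃b₃ = 0 (i.e. P_{a,b} = 0) and b₁ = a₃b₂ − a₂b₃ (i.e. δ := a₂b₃ − a₃b₂ + b₁ = 0), and let c ∈ ℍₛ. Then the equation ax² + bx + c = 0 has a solution x ∈ ℍₛ if and only if ac = 2c. (Under these hypotheses I_{2x₀a+b} = I_b = 0 for every x₀ ∈ ℝ, so every solution automatically satisfies 2Re(x)·a + b ∈ Z(ℍₛ).) -/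
open Quaternion

/-!
The hypotheses say that `a * star a = 0` and `b = a * (b₁ i)`. Since `a` has real part `1`, this
gives `a * a = a * (2 - star a) = 2 * a`, so every `c = -a * (x ^ 2 + b₁ i x)` satisfies
`a * c = 2 * c`. Conversely `i` anticommutes with `j` and `k`, so `a * i * a = a * star a * i = 0`;
hence, if `a * c = 2 * c`, the quadratic term vanishes at every scalar multiple of `i * c`, and the
remaining equation `b * x = -c` is solved by `x = (2 * b₁)⁻¹ i c`.
-/

theorem exists_mul_sq_add_mul_add_eq_zero_iff {K R : Type*} [CommRing K] [Ring R] [Algebra K R]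
    {r : K} {a v w : R} (hr : IsUnit r) (ha : a * a = r • a) (hvw : v * w = 1)
    (hawa : a * w * a = 0) (c : R) :
    (∃ x, a * x ^ 2 + a * v * x + c = 0) ↔ a * c = r • c := by
  constructor
  · rintro ⟨x, hx⟩
    have hc : c = a * -(x ^ 2 + v * x) := by
      rw [eq_neg_of_add_eq_zero_right hx]
      noncomm_ring
    rw [hc, ← mul_assoc, ha, smul_mul_assoc]
  · intro hc
    obtain ⟨s, hsr⟩ := hr.exists_left_inv
    have hsc : s • (a * c) = c := by rw [hc, smul_smul, hsr, one_smul]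
    have hawc : a * w * c = 0 := by
      rw [← hsc, mul_smul_comm, ← mul_assoc, hawa, zero_mul, smul_zero]
    refine ⟨-(s • (w * c)), ?_⟩
    have hquad : a * (-(s • (w * c))) ^ 2 = 0 := by
      rw [neg_sq, sq, ← mul_assoc, mul_smul_comm s a, ← mul_assoc a, hawc, smul_zero, zero_mul]
    have hlin : a * v * -(s • (w * c)) = -c := by
      rw [mul_neg, mul_smul_comm, mul_assoc, ← mul_assoc v, hvw, one_mul, hsc]
    rw [hquad, hlin, zero_add, neg_add_cancel]

section QuaternionAlgebra

variable {R : Type*} [CommRing R] {c₁ c₃ : R}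

theorem mul_self_eq_two_smul_of_mul_star_eq_zero {a : ℍ[R,c₁,c₃]} (hre : a.re = 1)
    (ha : a * star a = 0) : a * a = (2 : R) • a := by
  have hadd : a + star a = 2 := by simp [QuaternionAlgebra.self_add_star, hre]
  calc a * a = a * (a + star a) := by rw [mul_add, ha, add_zero]
    _ = (2 : R) • a := by rw [hadd, mul_two, two_smul]

theorem mk_imI_mul_eq_star_mul {a : ℍ[R,c₁,c₃]} (ha : a.imI = 0) (t : R) :
    (⟨0, t, 0, 0⟩ : ℍ[R,c₁,c₃]) * a = star a * ⟨0, t, 0, 0⟩ := by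
  ext <;> simp [ha, mul_comm, mul_left_comm]

theorem mul_mk_imI_mul_self_eq_zero {a : ℍ[R,c₁,c₃]} (hi : a.imI = 0) (ha : a * star a = 0)
    (t : R) : a * ⟨0, t, 0, 0⟩ * a = 0 := by
  rw [mul_assoc, mk_imI_mul_eq_star_mul hi, ← mul_assoc, ha, zero_mul]

theorem mk_one_zero_mul_star_eq_zero {a₂ a₃ : R} (ha : a₂ ^ 2 + a₃ ^ 2 = 1) :
    (⟨1, 0, a₂, a₃⟩ : ℍ[R,-1,1]) * star ⟨1, 0, a₂, a₃⟩ = 0 := by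
  have hre : 1 - a₂ * a₂ - a₃ * a₃ = 0 := by linear_combination -ha
  ext <;> simp [← sub_eq_add_neg, hre, mul_comm]

theorem mk_zero_eq_mul_mk_imI {a₂ a₃ b₁ b₂ b₃ : R} (ha : a₂ ^ 2 + a₃ ^ 2 = 1)
    (hab : a₂ * b₂ + a₃ * b₃ = 0) (hδ : b₁ = a₃ * b₂ - a₂ * b₃) :
    (⟨0, b₁, b₂, b₃⟩ : ℍ[R,-1,1]) = ⟨1, 0, a₂, a₃⟩ * ⟨0, b₁, 0, 0⟩ := by
  have h₂ : b₂ = a₃ * b₁ := by linear_combination (-b₂) * ha + a₂ * hab - a₃ * hδ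
  have h₃ : b₃ = -(a₂ * b₁) := by linear_combination (-b₃) * ha + a₃ * hab + a₂ * hδ
  ext <;> simp [h₂, h₃]

end QuaternionAlgebra

theorem stmt17_general {K : Type*} [Field K] [NeZero (2 : K)] (a₂ a₃ b₁ b₂ b₃ : K) (c : ℍ[K,-1,1])
    (ha : a₂ ^ 2 + a₃ ^ 2 = 1)
    (hb : (⟨0, b₁, b₂, b₃⟩ : ℍ[K,-1,1]) ≠ 0)
    (hab : a₂ * b₂ + a₃ * b₃ = 0)
    (hδ : b₁ = a₃ * b₂ - a₂ * b₃) :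
    let a : ℍ[K,-1,1] := ⟨1, 0, a₂, a₃⟩
    let b : ℍ[K,-1,1] := ⟨0, b₁, b₂, b₃⟩
    (∃ x : ℍ[K,-1,1], a * x ^ 2 + b * x + c = 0) ↔ a * c = 2 * c := by
  intro a b
  have hstar : a * star a = 0 := mk_one_zero_mul_star_eq_zero ha
  have hbv : b = a * ⟨0, b₁, 0, 0⟩ := mk_zero_eq_mul_mk_imI ha hab hδ
  have hb₁ : b₁ ≠ 0 := by
    rintro rfl
    exact hb (hbv.trans (mul_zero a))
  have hvw : (⟨0, b₁, 0, 0⟩ : ℍ[K,-1,1]) * ⟨0, -b₁⁻¹, 0, 0⟩ = 1 := by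
    ext <;> simp [hb₁]
  rw [hbv, two_mul, ← two_smul K]
  exact exists_mul_sq_add_mul_add_eq_zero_iff (NeZero.ne (2 : K)).isUnit
    (mul_self_eq_two_smul_of_mul_star_eq_zero rfl hstar) hvw
    (mul_mk_imI_mul_self_eq_zero rfl hstar _) c

/-- Theorem 5.3 solvability: for `a = 1 + a₂j + a₃k` with
`a₂² + a₃² = 1`, `b = b₁i + b₂j + b₃k ≠ 0` with `a₂b₂ + a₃b₃ = 0` and
`b₁ = a₃b₂ − a₂b₃` (i.e. `δ = 0`), and any `c`, the equation `ax² + bx + c = 0`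
has a solution iff `ac = 2c`. -/
theorem stmt17 (a₂ a₃ b₁ b₂ b₃ : ℝ) (c : ℍ[ℝ,-1,1])
    (ha : a₂ ^ 2 + a₃ ^ 2 = 1)
    (hb : (⟨0, b₁, b₂, b₃⟩ : ℍ[ℝ,-1,1]) ≠ 0)
    (hab : a₂ * b₂ + a₃ * b₃ = 0)
    (hδ : b₁ = a₃ * b₂ - a₂ * b₃) :
    let a : ℍ[ℝ,-1,1] := ⟨1, 0, a₂, a₃⟩
    let b : ℍ[ℝ,-1,1] := ⟨0, b₁, b₂, b₃⟩
    (∃ x : ℍ[ℝ,-1,1], a * x ^ 2 + b * x + c = 0) ↔ a * c = 2 * c :=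
  stmt17_general a₂ a₃ b₁ b₂ b₃ c ha hb hab hδ
end

section
/- Let a = 1 + a₂j + a₃k with a₂² + a₃² = 1, b = b₁i + b₂j + b₃k, and c = c₀ + c₁i + c₂j + c₃k in ℍₛ, and assume P_{a,b} = 0, I_b ≠ 0, I_b + 2P_{a,c} = 0, I_c = 0, and P_{b,c} = 0. Set δ = a₂b₃ − a₃b₂ + b₁, t₁ = c₂ − c₀a₂ − a₃c₁, t₂ = c₃ − c₀a₃ + a₂c₁. Then δ ≠ 0, and the following five identities hold: ((a₂b₁+b₃)² + (b₂−a₃b₁)²)/δ² = 1; (a₃(b₂−a₃b₁) − a₂(a₂b₁+b₃))/δ = −1; (a₃(a₂b₁+b₃) + a₂(b₂−a₃b₁))/δ = 0; (2t₂(a₂b₁+b₃) + 2t₁(b₂−a₃b₁))/δ² + (b₃(b₂−a₃b₁) − b₂(a₂b₁+b₃) + 2a₃t₁ − 2a₂t₂)/δ = 0; and (2t₂(a₃b₁−b₂) + 2t₁(a₂b₁+b₃))/δ² + ((a₂b₁+b₃)b₃ − b₂(a₃b₁−b₂))/δ − b₁ = 0. -/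
open Quaternion

open SplitQuat

/-!
Since `a` is null and `b` is pure and orthogonal to `a`, the product `b * a` has a single free
parameter: `b * a = δ • (i * a)`. The coefficients `b₂ - a₃ b₁` and `a₂ b₁ + b₃` in the theorem are
the `j`- and `k`-components of `b * a`, so they equal `-a₃ δ` and `a₂ δ`, and all the fractions
collapse. The scalar `δ` is nonzero because it divides `I_b`. Similarly `t₁`, `t₂` are the `j`- and
`k`-components of `star a * c`, whose real part is `P_{a,c}`; as `a` is null, `a * (star a * c) =
0`, which gives `a₂ t₁ + a₃ t₂ = -P_{a,c}`. The last identity is then `I_b + 2 P_{a,c} = 0` divided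
by `δ`.
-/

namespace SplitQuat

section CommRing

variable {R : Type*} [CommRing R]

/-- The symmetric bilinear form of the split quaternions over an arbitrary commutative ring, whose
value at `(x, y)` is the `P_{x,y}` and at `(x, x)` the `I_x` of the paper. -/
def bilinForm (x y : ℍ[R,-1,1]) : R := (x * star y).re

theorem bilinForm_apply (x y : ℍ[R,-1,1]) :
    bilinForm x y = x.re * y.re + x.imI * y.imI - x.imJ * y.imJ - x.imK * y.imK := by
  simp only [bilinForm, QuaternionAlgebra.re_mul, QuaternionAlgebra.re_star,
    QuaternionAlgebra.imI_star, QuaternionAlgebra.imJ_star, QuaternionAlgebra.imK_star]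
  ring

variable {a₂ a₃ b₁ b₂ b₃ : R}

theorem mul_eq_smul_mul_of_orthogonal (ha : a₂ ^ 2 + a₃ ^ 2 = 1)
    (hab : bilinForm (⟨1, 0, a₂, a₃⟩ : ℍ[R,-1,1]) ⟨0, b₁, b₂, b₃⟩ = 0) :
    (⟨0, b₁, b₂, b₃⟩ * ⟨1, 0, a₂, a₃⟩ : ℍ[R,-1,1]) =
      (a₂ * b₃ - a₃ * b₂ + b₁) • (⟨0, 1, 0, 0⟩ * ⟨1, 0, a₂, a₃⟩ : ℍ[R,-1,1]) := by
  rw [bilinForm_apply] at hab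
  dsimp only at hab
  ext <;> simp only [QuaternionAlgebra.mk_mul_mk, QuaternionAlgebra.smul_mk, smul_eq_mul]
  · linear_combination -hab
  · ring
  · linear_combination -b₂ * ha - a₂ * hab
  · linear_combination -b₃ * ha - a₃ * hab

theorem sub_mul_eq_neg_mul_of_orthogonal (ha : a₂ ^ 2 + a₃ ^ 2 = 1)
    (hab : bilinForm (⟨1, 0, a₂, a₃⟩ : ℍ[R,-1,1]) ⟨0, b₁, b₂, b₃⟩ = 0) :
    b₂ - a₃ * b₁ = -a₃ * (a₂ * b₃ - a₃ * b₂ + b₁) := by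
  have h := congrArg QuaternionAlgebra.imJ (mul_eq_smul_mul_of_orthogonal ha hab)
  simp only [QuaternionAlgebra.mk_mul_mk, QuaternionAlgebra.smul_mk, smul_eq_mul] at h
  linear_combination h

theorem mul_add_eq_mul_of_orthogonal (ha : a₂ ^ 2 + a₃ ^ 2 = 1)
    (hab : bilinForm (⟨1, 0, a₂, a₃⟩ : ℍ[R,-1,1]) ⟨0, b₁, b₂, b₃⟩ = 0) :
    a₂ * b₁ + b₃ = a₂ * (a₂ * b₃ - a₃ * b₂ + b₁) := by
  have h := congrArg QuaternionAlgebra.imK (mul_eq_smul_mul_of_orthogonal ha hab)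
  simp only [QuaternionAlgebra.mk_mul_mk, QuaternionAlgebra.smul_mk, smul_eq_mul] at h
  linear_combination h

theorem bilinForm_self_eq_mul_of_orthogonal (ha : a₂ ^ 2 + a₃ ^ 2 = 1)
    (hab : bilinForm (⟨1, 0, a₂, a₃⟩ : ℍ[R,-1,1]) ⟨0, b₁, b₂, b₃⟩ = 0) :
    bilinForm (⟨0, b₁, b₂, b₃⟩ : ℍ[R,-1,1]) ⟨0, b₁, b₂, b₃⟩ =
      (b₁ - (a₂ * b₃ - a₃ * b₂)) * (a₂ * b₃ - a₃ * b₂ + b₁) := by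
  rw [bilinForm_apply] at hab ⊢
  dsimp only at hab ⊢
  have lagrange : (a₂ ^ 2 + a₃ ^ 2) * (b₂ ^ 2 + b₃ ^ 2) =
      (a₂ * b₂ + a₃ * b₃) ^ 2 + (a₂ * b₃ - a₃ * b₂) ^ 2 := by ring
  linear_combination (b₂ ^ 2 + b₃ ^ 2) * ha - lagrange + (a₂ * b₂ + a₃ * b₃) * hab

theorem bilinForm_null_left_eq_neg (ha : a₂ ^ 2 + a₃ ^ 2 = 1) (c₀ c₁ c₂ c₃ : R) :
    bilinForm (⟨1, 0, a₂, a₃⟩ : ℍ[R,-1,1]) ⟨c₀, c₁, c₂, c₃⟩ =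
      -(a₂ * (c₂ - c₀ * a₂ - a₃ * c₁) + a₃ * (c₃ - c₀ * a₃ + a₂ * c₁)) := by
  rw [bilinForm_apply]
  linear_combination -c₀ * ha

end CommRing

theorem P_eq_bilinForm (x y : ℍ[ℝ,-1,1]) : P x y = bilinForm x y :=
  (bilinForm_apply x y).symm

theorem Ix_eq_bilinForm (x : ℍ[ℝ,-1,1]) : Ix x = bilinForm x x := by
  rw [bilinForm_apply, Ix]
  ring

end SplitQuat

theorem stmt18_general {K : Type*} [Field K] (a₂ a₃ b₁ b₂ b₃ c₀ c₁ c₂ c₃ : K)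
    (ha : a₂ ^ 2 + a₃ ^ 2 = 1)
    (hab : bilinForm (⟨1, 0, a₂, a₃⟩ : ℍ[K,-1,1]) ⟨0, b₁, b₂, b₃⟩ = 0)
    (hbb : bilinForm (⟨0, b₁, b₂, b₃⟩ : ℍ[K,-1,1]) ⟨0, b₁, b₂, b₃⟩ ≠ 0)
    (hac : bilinForm (⟨0, b₁, b₂, b₃⟩ : ℍ[K,-1,1]) ⟨0, b₁, b₂, b₃⟩
        + 2 * bilinForm (⟨1, 0, a₂, a₃⟩ : ℍ[K,-1,1]) ⟨c₀, c₁, c₂, c₃⟩ = 0) :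
    let δ : K := a₂ * b₃ - a₃ * b₂ + b₁
    let t₁ : K := c₂ - c₀ * a₂ - a₃ * c₁
    let t₂ : K := c₃ - c₀ * a₃ + a₂ * c₁
    δ ≠ 0 ∧
    ((a₂ * b₁ + b₃) ^ 2 + (b₂ - a₃ * b₁) ^ 2) / δ ^ 2 = 1 ∧
    (a₃ * (b₂ - a₃ * b₁) - a₂ * (a₂ * b₁ + b₃)) / δ = -1 ∧
    (a₃ * (a₂ * b₁ + b₃) + a₂ * (b₂ - a₃ * b₁)) / δ = 0 ∧
    (2 * t₂ * (a₂ * b₁ + b₃) + 2 * t₁ * (b₂ - a₃ * b₁)) / δ ^ 2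
      + (b₃ * (b₂ - a₃ * b₁) - b₂ * (a₂ * b₁ + b₃) + 2 * a₃ * t₁ - 2 * a₂ * t₂) / δ = 0 ∧
    (2 * t₂ * (a₃ * b₁ - b₂) + 2 * t₁ * (a₂ * b₁ + b₃)) / δ ^ 2
      + ((a₂ * b₁ + b₃) * b₃ - b₂ * (a₃ * b₁ - b₂)) / δ - b₁ = 0 := by
  intro δ t₁ t₂
  have hj : b₂ - a₃ * b₁ = -a₃ * δ := sub_mul_eq_neg_mul_of_orthogonal ha hab
  have hj' : a₃ * b₁ - b₂ = a₃ * δ := by linear_combination -hj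
  have hk : a₂ * b₁ + b₃ = a₂ * δ := mul_add_eq_mul_of_orthogonal ha hab
  have horth : a₂ * b₂ + a₃ * b₃ = 0 := by
    rw [bilinForm_apply] at hab
    linear_combination -hab
  rw [bilinForm_self_eq_mul_of_orthogonal ha hab] at hbb hac
  rw [bilinForm_null_left_eq_neg ha] at hac
  have hδ : δ ≠ 0 := right_ne_zero_of_mul hbb
  have hb₁ : b₁ - (a₂ * b₃ - a₃ * b₂) = 2 * (a₂ * t₁ + a₃ * t₂) / δ := by
    rw [eq_div_iff hδ]
    linear_combination hac
  rw [hj, hj', hk]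
  refine ⟨hδ, ?_, ?_, ?_, ?_, ?_⟩
  · rw [div_eq_one_iff_eq (pow_ne_zero 2 hδ)]
    linear_combination δ ^ 2 * ha
  · rw [div_eq_iff hδ]
    linear_combination -δ * ha
  · rw [div_eq_iff hδ]
    ring
  · calc _ = -(a₂ * b₂ + a₃ * b₃) := by field
      _ = 0 := by rw [horth, neg_zero]
  · calc _ = 2 * (a₂ * t₁ + a₃ * t₂) / δ - (b₁ - (a₂ * b₃ - a₃ * b₂)) := by field
      _ = 0 := by rw [hb₁, sub_self]

/-- Proposition 5.3: under `P_{a,b} = 0`, `I_b ≠ 0`,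
`I_b + 2P_{a,c} = 0`, `I_c = 0`, `P_{b,c} = 0`, we have `δ ≠ 0` and the five
identities hold. -/
theorem stmt18 (a₂ a₃ b₁ b₂ b₃ c₀ c₁ c₂ c₃ : ℝ)
    (ha : a₂ ^ 2 + a₃ ^ 2 = 1)
    (hPab : P (⟨1, 0, a₂, a₃⟩ : ℍ[ℝ,-1,1]) (⟨0, b₁, b₂, b₃⟩ : ℍ[ℝ,-1,1]) = 0)
    (hIb : Ix (⟨0, b₁, b₂, b₃⟩ : ℍ[ℝ,-1,1]) ≠ 0)
    (hIbPac : Ix (⟨0, b₁, b₂, b₃⟩ : ℍ[ℝ,-1,1])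
        + 2 * P (⟨1, 0, a₂, a₃⟩ : ℍ[ℝ,-1,1]) (⟨c₀, c₁, c₂, c₃⟩ : ℍ[ℝ,-1,1]) = 0)
    (hIc : Ix (⟨c₀, c₁, c₂, c₃⟩ : ℍ[ℝ,-1,1]) = 0)
    (hPbc : P (⟨0, b₁, b₂, b₃⟩ : ℍ[ℝ,-1,1]) (⟨c₀, c₁, c₂, c₃⟩ : ℍ[ℝ,-1,1]) = 0) :
    let δ : ℝ := a₂ * b₃ - a₃ * b₂ + b₁
    let t₁ : ℝ := c₂ - c₀ * a₂ - a₃ * c₁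
    let t₂ : ℝ := c₃ - c₀ * a₃ + a₂ * c₁
    δ ≠ 0 ∧
    ((a₂ * b₁ + b₃) ^ 2 + (b₂ - a₃ * b₁) ^ 2) / δ ^ 2 = 1 ∧
    (a₃ * (b₂ - a₃ * b₁) - a₂ * (a₂ * b₁ + b₃)) / δ = -1 ∧
    (a₃ * (a₂ * b₁ + b₃) + a₂ * (b₂ - a₃ * b₁)) / δ = 0 ∧
    (2 * t₂ * (a₂ * b₁ + b₃) + 2 * t₁ * (b₂ - a₃ * b₁)) / δ ^ 2
      + (b₃ * (b₂ - a₃ * b₁) - b₂ * (a₂ * b₁ + b₃) + 2 * a₃ * t₁ - 2 * a₂ * t₂) / δ = 0 ∧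
    (2 * t₂ * (a₃ * b₁ - b₂) + 2 * t₁ * (a₂ * b₁ + b₃)) / δ ^ 2
      + ((a₂ * b₁ + b₃) * b₃ - b₂ * (a₃ * b₁ - b₂)) / δ - b₁ = 0 := by
  simp only [P_eq_bilinForm, Ix_eq_bilinForm] at hPab hIb hIbPac
  exact stmt18_general a₂ a₃ b₁ b₂ b₃ c₀ c₁ c₂ c₃ ha hPab hIb hIbPac
end
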